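/- arXiv:1608.06730 — 4 statements merged into one kernel-verified Lean document; each statement's English description precedes it below -/
import Mathlib

section
/- There is a universal constant c > 0 such that for all μ, λ > 0 the following holds: if u₀, v₀ ∈ L²(ℝ³) are such that the Fourier transform û₀ is supported in {(ξ,η) ∈ ℝ×ℝ² : |ξ| < μ} and v̂₀ is supported in {(ξ,η) : |ξ| > λ}, then the product of the free KP-II evolutions satisfies the bilinear estimate ‖ S(t)u₀ · S(t)v₀ ‖_{L²(ℝ_t×ℝ³)} ≤ c μ ‖u₀‖_{L²(ℝ³)} ‖v₀‖_{L²(ℝ³)}. -/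
/-!
STATEMENT 5: bilinear estimate ‖S(t)u₀ · S(t)v₀‖_{L²(ℝ_t×ℝ³)} ≤ c μ ‖u₀‖₂ ‖v₀‖₂
for û₀ supported in {|ξ| < μ} and v̂₀ supported in {|ξ| > λ}.
Since u₀, v₀ are general L² functions, the statement is formulated (equivalently,
via Plancherel in the space variables) on the Fourier side: f = û₀, g = v̂₀ are
L² functions with the stated supports, and the spatial Fourier transform of the
product S(t)u₀ · S(t)v₀ is the (everywhere absolutely convergent) convolution
prodHat f g (t,·) of e^{itω}f and e^{itω}g.
-/

noncomputable section

open MeasureTheory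
open scoped ENNReal

abbrev E2 := EuclideanSpace ℝ (Fin 2)

/-- KP-II dispersion relation ω(ξ,η) = ξ³ − |η|²/ξ. -/
def omega (ζ : ℝ × E2) : ℝ := ζ.1 ^ 3 - ‖ζ.2‖ ^ 2 / ζ.1

/-- Spatial Fourier transform of the product S(t)u₀·S(t)v₀, where f = û₀, g = v̂₀:
the convolution of e^{itω}f and e^{itω}g. -/
def prodHat (f g : ℝ × E2 → ℂ) (t : ℝ) (ζ : ℝ × E2) : ℂ :=
  ∫ ζ₁ : ℝ × E2,
    (Complex.exp (Complex.I * ((t * omega ζ₁ : ℝ) : ℂ)) * f ζ₁) *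
    (Complex.exp (Complex.I * ((t * omega (ζ.1 - ζ₁.1, ζ.2 - ζ₁.2) : ℝ) : ℂ)) *
      g (ζ.1 - ζ₁.1, ζ.2 - ζ₁.2))

/-!
For fixed `ξ`-components `ξ₁`, `ξ₂` of the two frequencies, the dispersion relation is quadratic
in `η`, so the corresponding slice of the product is a product of two planar Schrödinger waves with
coefficients `-ξ₁⁻¹` and `-ξ₂⁻¹`. Writing the `L²` norm in time, with a Gaussian weight that is
removed at the end, as a double integral against the Fourier transform of the weight, one is left
with Schur's test: completing the square, the kernel has mass `O(1 / |ξ₁⁻¹ + ξ₂⁻¹|)`. This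
degenerates when `ξ₁` and `ξ₂` have opposite signs, but `|u v| = |u v̄|` allows the sign of one
coefficient to be flipped, which gives `O(1 / (|ξ₁⁻¹| + |ξ₂⁻¹|)) ≤ O(|ξ₁|)` in all cases.
Cauchy–Schwarz over the slices `|ξ₁| < μ` costs a further factor `2μ` in the square of the norm.
-/

section GeneralMeasureTheory

open Module Set

lemma lintegral_fun_norm_addHaar {E : Type*} [NormedAddCommGroup E] [NormedSpace ℝ E]
    [FiniteDimensional ℝ E] [Nontrivial E] [MeasurableSpace E] [BorelSpace E]
    (ν : Measure E) [ν.IsAddHaarMeasure] {k : ℝ → ℝ≥0∞} (hk : Measurable k) :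
    ∫⁻ x, k ‖x‖ ∂ν = finrank ℝ E * ν (Metric.ball 0 1) *
      ∫⁻ r in Ioi (0 : ℝ), ENNReal.ofReal (r ^ (finrank ℝ E - 1)) * k r :=
  calc
    ∫⁻ x, k ‖x‖ ∂ν = ∫⁻ x : ({0}ᶜ : Set E), k ‖x.1‖ ∂ν.comap (↑) := by
      rw [lintegral_subtype_comap (measurableSet_singleton _).compl fun x => k ‖x‖,
        restrict_compl_singleton]
    _ = ∫⁻ x, k x.2 ∂ν.toSphere.prod (.volumeIoiPow (finrank ℝ E - 1)) := by
      rw [← ν.measurePreserving_homeomorphUnitSphereProd.lintegral_comp (by fun_prop)]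
      simp only [homeomorphUnitSphereProd_apply_snd_coe]
    _ = ν.toSphere univ * ∫⁻ r : Ioi (0 : ℝ), k r ∂.volumeIoiPow (finrank ℝ E - 1) := by
      rw [lintegral_prod _ (by fun_prop)]
      simp only [lintegral_const, mul_comm]
    _ = _ := by
      rw [ν.toSphere_apply_univ, Measure.volumeIoiPow,
        lintegral_withDensity_eq_lintegral_mul _ (by fun_prop) (by fun_prop)]
      simp only [Pi.mul_apply]
      rw [lintegral_subtype_comap measurableSet_Ioi
        fun r : ℝ => ENNReal.ofReal (r ^ (finrank ℝ E - 1)) * k r]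

lemma lintegral_Ioi_mul_comp_sq (k : ℝ → ℝ≥0∞) :
    ∫⁻ r in Ioi (0 : ℝ), ENNReal.ofReal (2 * r) * k (r ^ 2) = ∫⁻ s in Ioi (0 : ℝ), k s := by
  have image_sq : (fun r : ℝ => r ^ 2) '' Ioi 0 = Ioi 0 := by
    ext s
    refine ⟨?_, fun hs => ⟨√s, Real.sqrt_pos.2 hs, Real.sq_sqrt (le_of_lt hs)⟩⟩
    rintro ⟨r, hr, rfl⟩
    exact pow_pos (mem_Ioi.1 hr) 2
  have injOn_sq : InjOn (fun r : ℝ => r ^ 2) (Ioi 0) := fun r hr s hs h =>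
    (pow_left_inj₀ (le_of_lt hr) (le_of_lt hs) two_ne_zero).1 h
  have hderiv : ∀ r ∈ Ioi (0 : ℝ), HasDerivWithinAt (fun r : ℝ => r ^ 2) (2 * r) (Ioi 0) r :=
    fun r _ => by simpa using (hasDerivAt_pow 2 r).hasDerivWithinAt
  have subst := lintegral_image_eq_lintegral_abs_deriv_mul measurableSet_Ioi hderiv injOn_sq k
  rw [image_sq] at subst
  rw [subst]
  refine setLIntegral_congr_fun measurableSet_Ioi fun r hr => ?_
  rw [abs_of_pos (mul_pos two_pos hr)]

lemma sq_lintegral_le_measure_mul_lintegral_sq {α : Type*} [MeasurableSpace α] {ν : Measure α}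
    {h : α → ℝ≥0∞} (hh : AEMeasurable h ν) {s : Set α} (hs : ∀ x ∉ s, h x = 0) :
    (∫⁻ x, h x ∂ν) ^ 2 ≤ ν s * ∫⁻ x, h x ^ 2 ∂ν := by
  have restrict_eq : ∫⁻ x, h x ∂ν = ∫⁻ x in s, h x ∂ν :=
    (setLIntegral_eq_of_support_subset fun x hx => by_contra fun hxs => hx (hs x hxs)).symm
  have holder := ENNReal.lintegral_mul_le_Lp_mul_Lq (ν.restrict s) Real.HolderConjugate.two_two
    hh.restrict (aemeasurable_const (b := 1))
  simp only [Pi.mul_apply, mul_one, ENNReal.rpow_two, one_pow, lintegral_one,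
    Measure.restrict_apply_univ] at holder
  calc (∫⁻ x, h x ∂ν) ^ 2
      ≤ ((∫⁻ x in s, h x ^ 2 ∂ν) ^ (1 / 2 : ℝ) * ν s ^ (1 / 2 : ℝ)) ^ 2 := by
        rw [restrict_eq]; gcongr
    _ = ν s * ∫⁻ x in s, h x ^ 2 ∂ν := by
        rw [mul_pow, ← ENNReal.rpow_mul_natCast, ← ENNReal.rpow_mul_natCast, mul_comm]
        norm_num
    _ ≤ ν s * ∫⁻ x, h x ^ 2 ∂ν := by gcongr; exact Measure.restrict_le_self

lemma lintegral_prod_prod_swap {α β γ : Type*} [MeasurableSpace α] [MeasurableSpace β]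
    [MeasurableSpace γ] {ρ : Measure α} {σ : Measure β} {τ : Measure γ} [SFinite ρ] [SFinite σ]
    [SFinite τ] {P : α × (β × γ) → ℝ≥0∞} (hP : Measurable P) :
    ∫⁻ q, P q ∂ρ.prod (σ.prod τ) = ∫⁻ b, ∫⁻ a, ∫⁻ c, P (a, (b, c)) ∂τ ∂ρ ∂σ := by
  have hP_swap : Measurable fun p : (α × β) × γ => P (p.1.1, (p.1.2, p.2)) := by fun_prop
  calc ∫⁻ q, P q ∂ρ.prod (σ.prod τ) = ∫⁻ a, ∫⁻ b, ∫⁻ c, P (a, (b, c)) ∂τ ∂σ ∂ρ := by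
        rw [lintegral_prod _ hP.aemeasurable]
        exact lintegral_congr fun a => lintegral_prod _ (Measurable.aemeasurable (by fun_prop))
    _ = ∫⁻ b, ∫⁻ a, ∫⁻ c, P (a, (b, c)) ∂τ ∂ρ ∂σ :=
        lintegral_lintegral_swap hP_swap.lintegral_prod_right'.aemeasurable

lemma ennreal_two_mul_le_add_sq (a b : ℝ≥0∞) : 2 * (a * b) ≤ a ^ 2 + b ^ 2 := by
  wlog hab : a ≤ b generalizing a b
  · rw [mul_comm a, add_comm]
    exact this b a (le_of_not_ge hab)
  obtain ⟨d, rfl⟩ := exists_add_of_le hab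
  calc 2 * (a * (a + d)) ≤ 2 * (a * (a + d)) + d ^ 2 := le_self_add
    _ = a ^ 2 + (a + d) ^ 2 := by ring

lemma lintegral_lintegral_mul_mul_le_of_symm {α : Type*} [MeasurableSpace α] {ν : Measure α}
    [SFinite ν] {m : α → ℝ≥0∞} (hm : Measurable m) {K : α → α → ℝ≥0∞}
    (hK : Measurable (Function.uncurry K)) (hsymm : ∀ z z', K z z' = K z' z) {C : ℝ≥0∞}
    (hC : ∀ z, ∫⁻ z', K z z' ∂ν ≤ C) :
    ∫⁻ z, ∫⁻ z', m z * m z' * K z z' ∂ν ∂ν ≤ C * ∫⁻ z, m z ^ 2 ∂ν := by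
  have hleft : Measurable fun p : α × α => m p.1 ^ 2 * K p.1 p.2 :=
    ((hm.comp measurable_fst).pow_const 2).mul hK
  have hright : Measurable fun p : α × α => m p.2 ^ 2 * K p.1 p.2 :=
    ((hm.comp measurable_snd).pow_const 2).mul hK
  have swap : ∫⁻ z, ∫⁻ z', m z' ^ 2 * K z z' ∂ν ∂ν = ∫⁻ z, ∫⁻ z', m z ^ 2 * K z z' ∂ν ∂ν := by
    rw [lintegral_lintegral_swap hright.aemeasurable]
    simp only [hsymm]
  have twice : 2 * ∫⁻ z, ∫⁻ z', m z * m z' * K z z' ∂ν ∂ν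
      ≤ 2 * ∫⁻ z, ∫⁻ z', m z ^ 2 * K z z' ∂ν ∂ν :=
    calc 2 * ∫⁻ z, ∫⁻ z', m z * m z' * K z z' ∂ν ∂ν
        = ∫⁻ z, ∫⁻ z', 2 * (m z * m z') * K z z' ∂ν ∂ν := by
          simp only [mul_assoc, lintegral_const_mul' 2 _ (by simp : (2 : ℝ≥0∞) ≠ ⊤)]
      _ ≤ ∫⁻ z, ∫⁻ z', (m z ^ 2 * K z z' + m z' ^ 2 * K z z') ∂ν ∂ν := by
          refine lintegral_mono fun z => lintegral_mono fun z' => ?_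
          rw [← add_mul]
          gcongr
          exact ennreal_two_mul_le_add_sq _ _
      _ = 2 * ∫⁻ z, ∫⁻ z', m z ^ 2 * K z z' ∂ν ∂ν := by
          simp only [lintegral_add_left (hK.of_uncurry_left.const_mul _)]
          rw [lintegral_add_left hleft.lintegral_prod_right', swap, two_mul]
  calc ∫⁻ z, ∫⁻ z', m z * m z' * K z z' ∂ν ∂ν
      ≤ ∫⁻ z, ∫⁻ z', m z ^ 2 * K z z' ∂ν ∂ν :=
        (ENNReal.mul_le_mul_iff_right two_ne_zero ENNReal.ofNat_ne_top).1 twice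
    _ = ∫⁻ z, m z ^ 2 * ∫⁻ z', K z z' ∂ν ∂ν := by
        simp only [lintegral_const_mul _ hK.of_uncurry_left]
    _ ≤ ∫⁻ z, m z ^ 2 * C ∂ν := by gcongr with z; exact hC z
    _ = C * ∫⁻ z, m z ^ 2 ∂ν := by rw [lintegral_mul_const _ (by fun_prop), mul_comm]

lemma eLpNorm_two_sq_eq_lintegral {α : Type*} [MeasurableSpace α] {F : Type*}
    [NormedAddCommGroup F] (h : α → F) (ν : Measure α) :
    eLpNorm h 2 ν ^ 2 = ∫⁻ x, ‖h x‖ₑ ^ 2 ∂ν := by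
  simpa using eLpNorm_nnreal_pow_eq_lintegral (p := 2) (μ := ν) (f := h) two_ne_zero

end GeneralMeasureTheory

section GaussianTime

open ProbabilityTheory Filter Topology Real
open scoped NNReal

lemma lintegral_enorm_charFun_gaussianReal (m : ℝ) {v : ℝ≥0} (hv : v ≠ 0) :
    ∫⁻ s, ‖charFun (gaussianReal m v) s‖ₑ = ENNReal.ofReal √(2 * π / v) := by
  have hv' : (0 : ℝ) < v / 2 := by positivity
  have enorm_charFun (s : ℝ) :
      ‖charFun (gaussianReal m v) s‖ₑ = ENNReal.ofReal (exp (-(v / 2) * s ^ 2)) := by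
    rw [charFun_gaussianReal, ← ofReal_norm, Complex.norm_exp]
    congr 2
    simp only [← Complex.ofReal_pow, Complex.sub_re, Complex.mul_re, Complex.ofReal_re,
      Complex.ofReal_im, mul_zero, sub_zero, Complex.I_re, Complex.mul_im, zero_mul, add_zero,
      Complex.I_im, mul_one, sub_self, Complex.div_ofNat_re, zero_sub]
    ring
  simp only [enorm_charFun]
  rw [← ofReal_integral_eq_lintegral_ofReal (integrable_exp_neg_mul_sq hv')
    (.of_forall fun s => (exp_pos _).le), integral_gaussian]
  congr 2
  field_simp

lemma ofReal_sqrt_mul_lintegral_gaussianReal {v : ℝ≥0} (hv : v ≠ 0) {F : ℝ → ℝ≥0∞}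
    (hF : Measurable F) :
    ENNReal.ofReal √(2 * π * v) * ∫⁻ t, F t ∂gaussianReal 0 v =
      ∫⁻ t, ENNReal.ofReal (exp (-t ^ 2 / (2 * v))) * F t := by
  have density (t : ℝ) : ENNReal.ofReal √(2 * π * v) * gaussianPDF 0 v t =
      ENNReal.ofReal (exp (-t ^ 2 / (2 * v))) := by
    have : √(2 * π * v) ≠ 0 := by positivity
    rw [gaussianPDF, ← ENNReal.ofReal_mul (sqrt_nonneg _)]
    simp only [gaussianPDFReal, sub_zero, mul_inv_cancel_left₀ this]
  rw [gaussianReal_of_var_ne_zero 0 hv,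
    lintegral_withDensity_eq_lintegral_mul _ (measurable_gaussianPDF 0 v) hF,
    ← lintegral_const_mul' _ _ ENNReal.ofReal_ne_top]
  simp only [Pi.mul_apply, ← mul_assoc, density]

lemma lintegral_le_of_forall_gaussianReal_le {F : ℝ → ℝ≥0∞} (hF : Measurable F) {C : ℝ≥0∞}
    (hC : ∀ v : ℝ≥0, v ≠ 0 →
      ENNReal.ofReal √(2 * π * v) * ∫⁻ t, F t ∂gaussianReal 0 v ≤ C) :
    ∫⁻ t, F t ≤ C := by
  let w (n : ℕ) (t : ℝ) : ℝ := exp (-t ^ 2 / (2 * ((n + 1 : ℕ) : ℝ)))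
  have tendsto_weight (t : ℝ) :
      Tendsto (fun n => ENNReal.ofReal (w n t) * F t) atTop (𝓝 (F t)) := by
    have hexp : Tendsto (fun n => w n t) atTop (𝓝 1) := by
      have hexponent : Tendsto (fun n : ℕ => -t ^ 2 / (2 * ((n + 1 : ℕ) : ℝ))) atTop (𝓝 0) :=
        tendsto_const_nhds.div_atTop ((tendsto_natCast_atTop_atTop.comp
          (tendsto_add_atTop_nat 1)).const_mul_atTop two_pos)
      simpa only [exp_zero] using hexponent.rexp
    simpa using ENNReal.Tendsto.mul_const (ENNReal.tendsto_ofReal hexp)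
      (.inl (by simp : ENNReal.ofReal 1 ≠ 0))
  calc ∫⁻ t, F t = ∫⁻ t, liminf (fun n => ENNReal.ofReal (w n t) * F t) atTop :=
        lintegral_congr fun t => (tendsto_weight t).liminf_eq.symm
    _ ≤ liminf (fun n => ∫⁻ t, ENNReal.ofReal (w n t) * F t) atTop :=
        lintegral_liminf_le fun n => by fun_prop
    _ ≤ C := by
        refine liminf_le_of_frequently_le' (.of_forall fun n => ?_)
        have := hC ((n + 1 : ℕ) : ℝ≥0) (by positivity)
        rwa [ofReal_sqrt_mul_lintegral_gaussianReal (by positivity) hF, NNReal.coe_natCast] at this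

end GaussianTime

section TTStar

open scoped ComplexConjugate
open Complex (I)

variable {α : Type*} [MeasurableSpace α] {ν : Measure α}

/-- The oscillatory integral `t ↦ ∫ e^{itΦ} H dν` with phase function `Φ` and amplitude `H`. -/
def oscIntegral (ν : Measure α) (Φ : α → ℝ) (H : α → ℂ) (t : ℝ) : ℂ :=
  ∫ z, Complex.exp (I * ((t * Φ z : ℝ) : ℂ)) * H z ∂ν

lemma norm_exp_I_mul_ofReal_mul (x : ℝ) (w : ℂ) : ‖Complex.exp (I * x) * w‖ = ‖w‖ := by
  rw [norm_mul, Complex.norm_exp_I_mul_ofReal, one_mul]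

lemma measurable_oscIntegral {X : Type*} [MeasurableSpace X] [SFinite ν] {Φ : X → α → ℝ}
    (hΦ : Measurable (Function.uncurry Φ)) {H : X → α → ℂ} (hH : Measurable (Function.uncurry H))
    {t : X → ℝ} (ht : Measurable t) :
    Measurable fun x => oscIntegral ν (Φ x) (H x) (t x) := by
  have hint : Measurable fun q : X × α =>
      Complex.exp (I * ((t q.1 * Φ q.1 q.2 : ℝ) : ℂ)) * H q.1 q.2 :=
    (Complex.measurable_exp.comp (measurable_const.mul (Complex.measurable_ofReal.comp
      ((ht.comp measurable_fst).mul hΦ)))).mul hH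
  exact hint.stronglyMeasurable.integral_prod_right'.measurable

lemma oscIntegral_of_not_integrable {Φ : α → ℝ} {H : α → ℂ}
    (hH : AEStronglyMeasurable H ν) (hnot : ¬ Integrable H ν) (t : ℝ) :
    oscIntegral ν Φ H t = 0 :=
  integral_undef fun hint =>
    hnot (hint.mono hH (.of_forall fun _ => (norm_exp_I_mul_ofReal_mul _ _).ge))

lemma ofReal_norm_oscIntegral_sq [SFinite ν] (Φ : α → ℝ) (H : α → ℂ) (t : ℝ) :
    ((‖oscIntegral ν Φ H t‖ ^ 2 : ℝ) : ℂ) =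
      oscIntegral (ν.prod ν) (fun p => Φ p.1 - Φ p.2) (fun p => H p.1 * conj (H p.2)) t := by
  rw [← Complex.normSq_eq_norm_sq, ← Complex.mul_conj]
  unfold oscIntegral
  rw [← integral_conj, ← integral_prod_mul]
  congr 1 with p
  have conj_exp : conj (Complex.exp (I * ((t * Φ p.2 : ℝ) : ℂ))) =
      Complex.exp (I * ((-(t * Φ p.2) : ℝ) : ℂ)) := by
    rw [← Complex.exp_conj]; simp
  have exp_sub : Complex.exp (I * ((t * (Φ p.1 - Φ p.2) : ℝ) : ℂ)) =
      Complex.exp (I * ((t * Φ p.1 : ℝ) : ℂ)) * Complex.exp (I * ((-(t * Φ p.2) : ℝ) : ℂ)) := by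
    rw [← Complex.exp_add]; push_cast; ring_nf
  rw [map_mul, conj_exp, exp_sub]
  ring

lemma integrable_exp_mul_prod (ρ : Measure ℝ) [IsFiniteMeasure ρ] [SFinite ν] {Φ : α → ℝ}
    {H : α → ℂ} (hΦ : Measurable Φ) (hH : Integrable H ν) :
    Integrable (fun q : ℝ × α => Complex.exp (I * ((q.1 * Φ q.2 : ℝ) : ℂ)) * H q.2)
      (ρ.prod ν) := by
  refine (hH.comp_snd ρ).norm.mono' (.mul ?_ hH.aestronglyMeasurable.comp_snd)
    (.of_forall fun _ => (norm_exp_I_mul_ofReal_mul _ _).le)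
  exact Measurable.aestronglyMeasurable (by fun_prop)

lemma integral_oscIntegral (ρ : Measure ℝ) [IsFiniteMeasure ρ] [SFinite ν] {Φ : α → ℝ}
    {H : α → ℂ} (hΦ : Measurable Φ) (hH : Integrable H ν) :
    ∫ t, oscIntegral ν Φ H t ∂ρ = ∫ z, charFun ρ (Φ z) * H z ∂ν := by
  unfold oscIntegral
  rw [integral_integral_swap (integrable_exp_mul_prod ρ hΦ hH)]
  congr 1 with z
  rw [integral_mul_const, charFun_apply_real]
  congr 2 with t
  push_cast
  ring_nf

lemma integrable_mul_conj_prod [SFinite ν] {H : α → ℂ} (hH : Integrable H ν) :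
    Integrable (fun p : α × α => H p.1 * conj (H p.2)) (ν.prod ν) :=
  hH.mul_prod (Complex.conjCLE.integrable_comp_iff.2 hH)

lemma lintegral_enorm_oscIntegral_sq_le (ρ : Measure ℝ) [IsFiniteMeasure ρ] [SFinite ν]
    {Φ : α → ℝ} {H : α → ℂ} (hΦ : Measurable Φ) (hH : AEStronglyMeasurable H ν) :
    ∫⁻ t, ‖oscIntegral ν Φ H t‖ₑ ^ 2 ∂ρ ≤
      ∫⁻ z, ∫⁻ z', ‖H z‖ₑ * ‖H z'‖ₑ * ‖charFun ρ (Φ z - Φ z')‖ₑ ∂ν ∂ν := by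
  by_cases hint : Integrable H ν
  swap
  · simp [oscIntegral_of_not_integrable hH hint]
  have hΦ₂ : Measurable fun p : α × α => Φ p.1 - Φ p.2 := by fun_prop
  have hH₂ := integrable_mul_conj_prod hint
  have hsq : Integrable (fun t => ‖oscIntegral ν Φ H t‖ ^ 2) ρ := by
    have hcomplex : Integrable (fun t => ((‖oscIntegral ν Φ H t‖ ^ 2 : ℝ) : ℂ)) ρ := by
      simp only [ofReal_norm_oscIntegral_sq]
      exact (integrable_exp_mul_prod ρ hΦ₂ hH₂).integral_prod_left
    exact hcomplex.re
  have hmeas : AEStronglyMeasurable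
      (fun p : α × α => charFun ρ (Φ p.1 - Φ p.2) * (H p.1 * conj (H p.2))) (ν.prod ν) :=
    (measurable_charFun.comp hΦ₂).aestronglyMeasurable.mul hH₂.aestronglyMeasurable
  calc ∫⁻ t, ‖oscIntegral ν Φ H t‖ₑ ^ 2 ∂ρ
      = ‖∫ t, ((‖oscIntegral ν Φ H t‖ ^ 2 : ℝ) : ℂ) ∂ρ‖ₑ := by
        rw [integral_complex_ofReal, ← ofReal_norm, Complex.norm_of_nonneg (by positivity),
          ofReal_integral_eq_lintegral_ofReal hsq (.of_forall fun t => by positivity)]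
        simp [ENNReal.ofReal_pow]
    _ = ‖∫ p, charFun ρ (Φ p.1 - Φ p.2) * (H p.1 * conj (H p.2)) ∂ν.prod ν‖ₑ := by
        simp only [ofReal_norm_oscIntegral_sq]
        rw [integral_oscIntegral ρ hΦ₂ hH₂]
    _ ≤ ∫⁻ p, ‖charFun ρ (Φ p.1 - Φ p.2) * (H p.1 * conj (H p.2))‖ₑ ∂ν.prod ν :=
        enorm_integral_le_lintegral_enorm _
    _ = _ := by
        rw [lintegral_prod _ hmeas.enorm]
        simp only [enorm_mul, RCLike.enorm_conj, mul_comm]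

end TTStar

section Plane

open Module Set Real ProbabilityTheory

lemma lintegral_comp_mul_add {k : ℝ → ℝ≥0∞} (hk : Measurable k) {c : ℝ} (hc : c ≠ 0) (d : ℝ) :
    ∫⁻ s, k (c * s + d) = ENNReal.ofReal |c⁻¹| * ∫⁻ s, k s := by
  calc ∫⁻ s, k (c * s + d) = ∫⁻ s, k (s + d) ∂(volume.map (c * ·)) :=
        (lintegral_map (hk.comp (measurable_add_const d)) (measurable_const_mul c)).symm
    _ = ENNReal.ofReal |c⁻¹| * ∫⁻ s, k s := by
        rw [Real.map_volume_mul_left hc, lintegral_smul_measure, smul_eq_mul,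
          lintegral_add_right_eq_self k d]

variable {E : Type*} [NormedAddCommGroup E] [InnerProductSpace ℝ E]

/-- The phase, up to a factor of `t`, of the product of two Schrödinger waves with output
frequency `x`, when the first has dispersion `a‖·‖²` and frequency `z` and the second has
dispersion `b‖·‖²`. -/
def quadPhase (a b : ℝ) (x z : E) : ℝ := a * ‖z‖ ^ 2 + b * ‖x - z‖ ^ 2

lemma exists_quadPhase_eq_mul_norm_sub_sq_add {a b : ℝ} (hab : a + b ≠ 0) (x : E) :
    ∃ (c : E) (d : ℝ), ∀ z, quadPhase a b x z = (a + b) * ‖z - c‖ ^ 2 + d := by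
  refine ⟨(b / (a + b)) • x, b * ‖x‖ ^ 2 - (a + b) * ‖(b / (a + b)) • x‖ ^ 2, fun z => ?_⟩
  rw [quadPhase, norm_sub_sq_real, norm_sub_sq_real, real_inner_smul_right, real_inner_comm]
  field_simp
  ring

variable [FiniteDimensional ℝ E] [MeasurableSpace E] [BorelSpace E]

lemma lintegral_comp_norm_sq (hE : finrank ℝ E = 2) {k : ℝ → ℝ≥0∞} (hk : Measurable k) :
    ∫⁻ z : E, k (‖z‖ ^ 2) = ENNReal.ofReal π * ∫⁻ s in Ioi (0 : ℝ), k s := by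
  have : Nontrivial E := nontrivial_of_finrank_pos (R := ℝ) (by omega)
  have volume_ball : volume (Metric.ball (0 : E) 1) = ENNReal.ofReal π := by
    simp [InnerProductSpace.volume_ball_of_dim_even (k := 1) (by omega) (0 : E) 1]
  have hk_sq : Measurable fun r : ℝ => k (r ^ 2) := by fun_prop
  rw [lintegral_fun_norm_addHaar volume hk_sq, volume_ball, hE, ← lintegral_Ioi_mul_comp_sq k]
  simp only [ENNReal.ofReal_mul zero_le_two, mul_assoc]
  rw [lintegral_const_mul' _ _ ENNReal.ofReal_ne_top]
  simp only [Nat.cast_ofNat, ENNReal.ofReal_ofNat, Nat.add_one_sub_one, pow_one]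
  ring

lemma lintegral_comp_mul_norm_sq_add_le (hE : finrank ℝ E = 2) {k : ℝ → ℝ≥0∞}
    (hk : Measurable k) {c : ℝ} (hc : c ≠ 0) (d : ℝ) :
    ∫⁻ z : E, k (c * ‖z‖ ^ 2 + d) ≤ ENNReal.ofReal (π / |c|) * ∫⁻ s, k s :=
  calc ∫⁻ z : E, k (c * ‖z‖ ^ 2 + d)
      = ENNReal.ofReal π * ∫⁻ s in Ioi (0 : ℝ), k (c * s + d) :=
        lintegral_comp_norm_sq hE (k := fun s => k (c * s + d)) (by fun_prop)
    _ ≤ ENNReal.ofReal π * ∫⁻ s, k (c * s + d) := by gcongr; exact Measure.restrict_le_self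
    _ = ENNReal.ofReal (π / |c|) * ∫⁻ s, k s := by
        rw [lintegral_comp_mul_add hk hc, ← mul_assoc, ← ENNReal.ofReal_mul pi_nonneg, abs_inv,
          div_eq_mul_inv]

lemma lintegral_comp_sub_quadPhase_le (hE : finrank ℝ E = 2) {k : ℝ → ℝ≥0∞}
    (hk : Measurable k) {a b : ℝ} (hab : a + b ≠ 0) (s : ℝ) (x : E) :
    ∫⁻ z, k (s - quadPhase a b x z) ≤ ENNReal.ofReal (π / |a + b|) * ∫⁻ s, k s := by
  obtain ⟨c, d, hcd⟩ := exists_quadPhase_eq_mul_norm_sub_sq_add hab x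
  have hrw (z : E) : s - quadPhase a b x z = -(a + b) * ‖z - c‖ ^ 2 + (s - d) := by
    rw [hcd]; ring
  simp only [hrw]
  rw [lintegral_sub_right_eq_self (fun z => k (-(a + b) * ‖z‖ ^ 2 + (s - d))) c, ← abs_neg]
  exact lintegral_comp_mul_norm_sq_add_le hE hk (neg_ne_zero.2 hab) _

/-- The quadrilinear form that the `TT*` method produces for the product of two Schrödinger waves
with frequency profiles of modulus `φ` and `γ`, the time integral having been carried out into the
kernel `k` of the difference of the phases. -/
def interaction (k : ℝ → ℝ≥0∞) (a b : ℝ) (φ γ : E → ℝ≥0∞) : ℝ≥0∞ :=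
  ∫⁻ x, ∫⁻ z, ∫⁻ z', φ z * γ (x - z) * (φ z' * γ (x - z')) *
    k (quadPhase a b x z - quadPhase a b x z')

section Interaction

variable {k : ℝ → ℝ≥0∞} {φ γ : E → ℝ≥0∞}

lemma interaction_eq_lintegral_swap (hk : Measurable k) (hφ : Measurable φ) (hγ : Measurable γ)
    (a b : ℝ) :
    interaction k a b φ γ = ∫⁻ z, ∫⁻ z', ∫⁻ x, φ z * γ (x - z) * (φ z' * γ (x - z')) *
      k (quadPhase a b x z - quadPhase a b x z') := by
  unfold interaction quadPhase
  rw [lintegral_lintegral_swap (Measurable.aemeasurable (by fun_prop))]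
  refine lintegral_congr fun z => ?_
  rw [lintegral_lintegral_swap (Measurable.aemeasurable (by fun_prop))]

-- On the Fourier side this is `|u v| = |u v̄|`.
lemma interaction_neg_comp_neg (hk : Measurable k) (hφ : Measurable φ) (hγ : Measurable γ)
    (a b : ℝ) :
    interaction k a (-b) φ (fun y => γ (-y)) = interaction k a b φ γ := by
  rw [interaction_eq_lintegral_swap hk hφ (γ := fun y => γ (-y)) (by fun_prop),
    interaction_eq_lintegral_swap hk hφ hγ]
  refine lintegral_congr fun z => lintegral_congr fun z' => ?_
  rw [← lintegral_sub_left_eq_self _ (z + z')]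
  refine lintegral_congr fun x => ?_
  have first : z + z' - x - z = -(x - z') := by abel
  have second : z + z' - x - z' = -(x - z) := by abel
  have phase : quadPhase a (-b) (z + z' - x) z - quadPhase a (-b) (z + z' - x) z' =
      quadPhase a b x z - quadPhase a b x z' := by
    unfold quadPhase
    rw [first, second, norm_neg, norm_neg]
    ring
  rw [phase, first, second, neg_neg, neg_neg]
  ring

lemma interaction_le_of_add_ne_zero (hk : Measurable k) (hφ : Measurable φ) (hγ : Measurable γ)
    (hE : finrank ℝ E = 2) (hk_even : k.Even) {a b : ℝ} (hab : a + b ≠ 0) :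
    interaction k a b φ γ ≤ ENNReal.ofReal (π / |a + b|) * (∫⁻ s, k s) *
      ((∫⁻ z, φ z ^ 2) * ∫⁻ z, γ z ^ 2) := by
  set C := ENNReal.ofReal (π / |a + b|) * ∫⁻ s, k s
  have schur (x : E) : ∫⁻ z, ∫⁻ z', φ z * γ (x - z) * (φ z' * γ (x - z')) *
      k (quadPhase a b x z - quadPhase a b x z') ≤ C * ∫⁻ z, (φ z * γ (x - z)) ^ 2 := by
    refine lintegral_lintegral_mul_mul_le_of_symm (by fun_prop)
      (by unfold quadPhase Function.uncurry; fun_prop) (fun z z' => ?_)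
      (fun z => lintegral_comp_sub_quadPhase_le hE hk hab _ x)
    rw [← hk_even, neg_sub]
  calc interaction k a b φ γ ≤ ∫⁻ x, C * ∫⁻ z, (φ z * γ (x - z)) ^ 2 := lintegral_mono schur
    _ = C * ∫⁻ x, ∫⁻ z, (φ z * γ (x - z)) ^ 2 :=
        lintegral_const_mul _ (Measurable.lintegral_prod_right'
          (f := fun q : E × E => (φ q.2 * γ (q.1 - q.2)) ^ 2) (by fun_prop))
    _ = C * ∫⁻ z, ∫⁻ x, (φ z * γ (x - z)) ^ 2 := by
        rw [lintegral_lintegral_swap (Measurable.aemeasurable (by fun_prop))]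
    _ = C * ((∫⁻ z, φ z ^ 2) * ∫⁻ z, γ z ^ 2) := by
        have inner (z : E) : ∫⁻ x, (φ z * γ (x - z)) ^ 2 = φ z ^ 2 * ∫⁻ y, γ y ^ 2 := by
          simp only [mul_pow]
          rw [lintegral_const_mul _ (by fun_prop),
            lintegral_sub_right_eq_self (fun y => γ y ^ 2) z]
        simp only [inner]
        rw [lintegral_mul_const _ (by fun_prop)]

lemma interaction_le (hk : Measurable k) (hφ : Measurable φ) (hγ : Measurable γ)
    (hE : finrank ℝ E = 2) (hk_even : k.Even) {a b : ℝ} (hab : |a| + |b| ≠ 0) :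
    interaction k a b φ γ ≤ ENNReal.ofReal (π / (|a| + |b|)) * (∫⁻ s, k s) *
      ((∫⁻ z, φ z ^ 2) * ∫⁻ z, γ z ^ 2) := by
  have same_sign_or_opposite : |a + b| = |a| + |b| ∨ |a + -b| = |a| + |b| := by
    rw [← abs_neg b, abs_add_eq_add_abs_iff, abs_neg b, abs_add_eq_add_abs_iff]
    rcases le_total 0 a with ha | ha <;> rcases le_total 0 b with hb | hb <;> simp [ha, hb]
  rcases same_sign_or_opposite with h | h
  · rw [← h]
    exact interaction_le_of_add_ne_zero hk hφ hγ hE hk_even (abs_ne_zero.1 (h ▸ hab))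
  · rw [← interaction_neg_comp_neg hk hφ hγ, ← h, ← lintegral_neg_eq_self fun y => γ y ^ 2]
    exact interaction_le_of_add_ne_zero hk hφ (hγ.comp measurable_neg) hE hk_even
      (abs_ne_zero.1 (h ▸ hab))

end Interaction

/-- The spatial Fourier transform, at time `t` and frequency `x`, of the product of the
Schrödinger waves with dispersion relations `p + a‖·‖²` and `b‖·‖²` and with data whose Fourier
transforms are `f` and `g`. -/
def schrodingerProd (p a b : ℝ) (f g : E → ℂ) (t : ℝ) (x : E) : ℂ :=
  oscIntegral volume (fun z => p + quadPhase a b x z) (fun z => f z * g (x - z)) t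

section Schrodinger

variable (p : ℝ) {a b : ℝ} {f g : E → ℂ}

lemma measurable_schrodingerProd (hf : Measurable f) (hg : Measurable g) :
    Measurable fun q : ℝ × E => schrodingerProd p a b f g q.1 q.2 :=
  measurable_oscIntegral (by unfold quadPhase Function.uncurry; fun_prop)
    (by unfold Function.uncurry; fun_prop) measurable_fst

lemma lintegral_enorm_schrodingerProd_sq_le_interaction (hf : Measurable f) (hg : Measurable g)
    (ρ : Measure ℝ) [IsFiniteMeasure ρ] :
    ∫⁻ t, (∫⁻ x, ‖schrodingerProd p a b f g t x‖ₑ ^ 2) ∂ρ ≤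
      interaction (fun s => ‖charFun ρ s‖ₑ) a b (fun z => ‖f z‖ₑ) (fun z => ‖g z‖ₑ) := by
  rw [lintegral_lintegral_swap
    ((measurable_schrodingerProd p hf hg).enorm.pow_const 2).aemeasurable]
  refine lintegral_mono fun x => ?_
  have ttStar := lintegral_enorm_oscIntegral_sq_le ρ (ν := volume)
    (Φ := fun z => p + quadPhase a b x z) (H := fun z => f z * g (x - z))
    (by unfold quadPhase; fun_prop) (Measurable.aestronglyMeasurable (by fun_prop))
  simp only [add_sub_add_left_eq_sub, enorm_mul] at ttStar
  exact ttStar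

theorem lintegral_enorm_schrodingerProd_sq_le (hf : Measurable f) (hg : Measurable g)
    (hE : finrank ℝ E = 2) (hab : |a| + |b| ≠ 0) :
    ∫⁻ t, ∫⁻ x, ‖schrodingerProd p a b f g t x‖ₑ ^ 2 ≤
      ENNReal.ofReal (2 * π ^ 2 / (|a| + |b|)) * ((∫⁻ z, ‖f z‖ₑ ^ 2) * ∫⁻ z, ‖g z‖ₑ ^ 2) := by
  have hmeas := ((measurable_schrodingerProd p (a := a) (b := b) hf hg).enorm.pow_const 2)
  refine lintegral_le_of_forall_gaussianReal_le hmeas.lintegral_prod_right' fun v hv => ?_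
  have charFun_even : (fun s => ‖charFun (gaussianReal 0 v) s‖ₑ).Even := fun s => by
    simp only [charFun_neg, RCLike.enorm_conj]
  have constant : √(2 * π * v) * (π / (|a| + |b|) * √(2 * π / v)) = 2 * π ^ 2 / (|a| + |b|) := by
    have : √(2 * π * v) * √(2 * π / v) = 2 * π := by
      rw [← sqrt_mul (by positivity), show 2 * π * v * (2 * π / v) = (2 * π) ^ 2 by field_simp,
        sqrt_sq (by positivity)]
    rw [mul_left_comm, this]
    ring
  calc ENNReal.ofReal √(2 * π * v) *
        ∫⁻ t, (∫⁻ x, ‖schrodingerProd p a b f g t x‖ₑ ^ 2) ∂gaussianReal 0 v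
      ≤ ENNReal.ofReal √(2 * π * v) * (ENNReal.ofReal (π / (|a| + |b|)) *
          (∫⁻ s, ‖charFun (gaussianReal 0 v) s‖ₑ) *
            ((∫⁻ z, ‖f z‖ₑ ^ 2) * ∫⁻ z, ‖g z‖ₑ ^ 2)) := by
        gcongr
        exact (lintegral_enorm_schrodingerProd_sq_le_interaction p hf hg _).trans
          (interaction_le measurable_charFun.enorm hf.enorm hg.enorm hE charFun_even hab)
    _ = _ := by
        rw [lintegral_enorm_charFun_gaussianReal 0 hv, ← mul_assoc,
          ← ENNReal.ofReal_mul (by positivity), ← ENNReal.ofReal_mul (by positivity), constant]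

end Schrodinger

end Plane

section KP

open Set Real

/-- The contribution to `prodHat f g t (ξ₁ + ξ₂, x)` of the pairs of frequencies whose first
components are `ξ₁` and `ξ₂`. Once these are frozen, `omega` is a Schrödinger dispersion relation
in `η`, up to an additive constant. -/
def kpSlice (f g : ℝ × E2 → ℂ) (ξ₁ ξ₂ t : ℝ) (x : E2) : ℂ :=
  schrodingerProd (ξ₁ ^ 3 + ξ₂ ^ 3) (-ξ₁⁻¹) (-ξ₂⁻¹) (fun z => f (ξ₁, z)) (fun z => g (ξ₂, z)) t x

lemma omega_add_omega_eq (ξ₁ ξ₂ : ℝ) (x z : E2) :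
    omega (ξ₁, z) + omega (ξ₂, x - z) = ξ₁ ^ 3 + ξ₂ ^ 3 + quadPhase (-ξ₁⁻¹) (-ξ₂⁻¹) x z := by
  unfold omega quadPhase
  ring

lemma kpSlice_eq_integral (f g : ℝ × E2 → ℂ) (ξ₁ ξ₂ t : ℝ) (x : E2) :
    kpSlice f g ξ₁ ξ₂ t x =
      ∫ z, Complex.exp (Complex.I * ((t * omega (ξ₁, z) : ℝ) : ℂ)) * f (ξ₁, z) *
        (Complex.exp (Complex.I * ((t * omega (ξ₂, x - z) : ℝ) : ℂ)) * g (ξ₂, x - z)) := by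
  unfold kpSlice schrodingerProd oscIntegral
  congr 1 with z
  beta_reduce
  rw [← omega_add_omega_eq, mul_mul_mul_comm, ← Complex.exp_add]
  push_cast
  ring_nf

lemma enorm_prodHat_le_lintegral_enorm_kpSlice (f g : ℝ × E2 → ℂ) (t : ℝ) (ζ : ℝ × E2) :
    ‖prodHat f g t ζ‖ₑ ≤ ∫⁻ ξ₁, ‖kpSlice f g ξ₁ (ζ.1 - ξ₁) t ζ.2‖ₑ := by
  simp only [kpSlice_eq_integral]
  unfold prodHat
  by_cases hint : Integrable fun ζ₁ : ℝ × E2 =>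
    (Complex.exp (Complex.I * ((t * omega ζ₁ : ℝ) : ℂ)) * f ζ₁) *
    (Complex.exp (Complex.I * ((t * omega (ζ.1 - ζ₁.1, ζ.2 - ζ₁.2) : ℝ) : ℂ)) *
      g (ζ.1 - ζ₁.1, ζ.2 - ζ₁.2))
  · rw [Measure.volume_eq_prod] at hint ⊢
    rw [integral_prod _ hint]
    exact enorm_integral_le_lintegral_enorm _
  · rw [integral_undef hint, enorm_zero]
    exact zero_le

lemma prodHat_congr_ae {f f' g g' : ℝ × E2 → ℂ} (hf : f =ᵐ[volume] f') (hg : g =ᵐ[volume] g') :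
    prodHat f g = prodHat f' g' := by
  ext t ζ
  have : (volume : Measure (ℝ × E2)).IsAddLeftInvariant := by
    rw [Measure.volume_eq_prod]; infer_instance
  have hg_sub : ∀ᵐ ζ₁ : ℝ × E2, g (ζ - ζ₁) = g' (ζ - ζ₁) :=
    (quasiMeasurePreserving_sub_left volume ζ).ae hg
  refine integral_congr_ae ?_
  filter_upwards [hf, hg_sub] with ζ₁ hfζ₁ hgζ₁
  change g (ζ.1 - ζ₁.1, ζ.2 - ζ₁.2) = g' (ζ.1 - ζ₁.1, ζ.2 - ζ₁.2) at hgζ₁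
  rw [hfζ₁, hgζ₁]

section Measurable

variable {f g : ℝ × E2 → ℂ} {μ : ℝ}

lemma measurable_kpSlice (hf : Measurable f) (hg : Measurable g) :
    Measurable fun q : ℝ × (ℝ × (ℝ × E2)) => kpSlice f g q.1 (q.2.2.1 - q.1) q.2.1 q.2.2.2 :=
  measurable_oscIntegral (by unfold quadPhase Function.uncurry; fun_prop)
    (by unfold Function.uncurry; fun_prop) (by fun_prop)

lemma lintegral_enorm_kpSlice_sq_le (hf : Measurable f) (hg : Measurable g) {ξ₁ : ℝ}
    (hξ₁ : ξ₁ ≠ 0) (ξ₂ : ℝ) :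
    ∫⁻ t, ∫⁻ x, ‖kpSlice f g ξ₁ ξ₂ t x‖ₑ ^ 2 ≤ ENNReal.ofReal (2 * π ^ 2 * |ξ₁|) *
      ((∫⁻ z, ‖f (ξ₁, z)‖ₑ ^ 2) * ∫⁻ z, ‖g (ξ₂, z)‖ₑ ^ 2) := by
  have hinv : 0 < |-ξ₁⁻¹| := abs_pos.2 (neg_ne_zero.2 (inv_ne_zero hξ₁))
  have hconst : 2 * π ^ 2 / (|-ξ₁⁻¹| + |-ξ₂⁻¹|) ≤ 2 * π ^ 2 * |ξ₁| :=
    calc 2 * π ^ 2 / (|-ξ₁⁻¹| + |-ξ₂⁻¹|) ≤ 2 * π ^ 2 / |-ξ₁⁻¹| := by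
          gcongr; exact le_add_of_nonneg_right (abs_nonneg _)
      _ = 2 * π ^ 2 * |ξ₁| := by rw [abs_neg, abs_inv, div_inv_eq_mul]
  refine (lintegral_enorm_schrodingerProd_sq_le _ (by fun_prop) (by fun_prop)
    finrank_euclideanSpace_fin (by positivity)).trans ?_
  gcongr

lemma lintegral_prod_enorm_kpSlice_sq_le (hf : Measurable f) (hg : Measurable g) {ξ₁ : ℝ}
    (hξ₁ : ξ₁ ≠ 0) :
    ∫⁻ q : ℝ × (ℝ × E2), ‖kpSlice f g ξ₁ (q.2.1 - ξ₁) q.1 q.2.2‖ₑ ^ 2 ≤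
      ENNReal.ofReal (2 * π ^ 2 * |ξ₁|) * ((∫⁻ z, ‖f (ξ₁, z)‖ₑ ^ 2) * ∫⁻ ζ, ‖g ζ‖ₑ ^ 2) := by
  have hmeas : Measurable fun q : ℝ × (ℝ × E2) =>
      ‖kpSlice f g ξ₁ (q.2.1 - ξ₁) q.1 q.2.2‖ₑ ^ 2 :=
    ((measurable_kpSlice hf hg).comp measurable_prodMk_left).enorm.pow_const 2
  calc ∫⁻ q : ℝ × (ℝ × E2), ‖kpSlice f g ξ₁ (q.2.1 - ξ₁) q.1 q.2.2‖ₑ ^ 2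
      = ∫⁻ ξ, ∫⁻ t, ∫⁻ x, ‖kpSlice f g ξ₁ (ξ - ξ₁) t x‖ₑ ^ 2 :=
        lintegral_prod_prod_swap hmeas
    _ ≤ ∫⁻ ξ, ENNReal.ofReal (2 * π ^ 2 * |ξ₁|) *
          ((∫⁻ z, ‖f (ξ₁, z)‖ₑ ^ 2) * ∫⁻ z, ‖g (ξ - ξ₁, z)‖ₑ ^ 2) :=
        lintegral_mono fun ξ => lintegral_enorm_kpSlice_sq_le hf hg hξ₁ _
    _ = _ := by
        have hg_sq : Measurable fun ξ => ∫⁻ z, ‖g (ξ, z)‖ₑ ^ 2 :=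
          (hg.enorm.pow_const 2).lintegral_prod_right'
        have hg_sub : Measurable fun ξ => ∫⁻ z, ‖g (ξ - ξ₁, z)‖ₑ ^ 2 :=
          hg_sq.comp (measurable_sub_const ξ₁)
        rw [lintegral_const_mul _ (hg_sub.const_mul _), lintegral_const_mul _ hg_sub,
          lintegral_sub_right_eq_self (fun ξ => ∫⁻ z, ‖g (ξ, z)‖ₑ ^ 2) ξ₁,
          Measure.volume_eq_prod ℝ E2, lintegral_prod _ (hg.enorm.pow_const 2).aemeasurable]

lemma enorm_prodHat_sq_le (hf : Measurable f) (hg : Measurable g)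
    (hfs : ∀ ζ, f ζ ≠ 0 → |ζ.1| < μ) (t : ℝ) (ζ : ℝ × E2) :
    ‖prodHat f g t ζ‖ₑ ^ 2 ≤
      ENNReal.ofReal (2 * μ) * ∫⁻ ξ₁, ‖kpSlice f g ξ₁ (ζ.1 - ξ₁) t ζ.2‖ₑ ^ 2 := by
  have hmeas : Measurable fun ξ₁ => ‖kpSlice f g ξ₁ (ζ.1 - ξ₁) t ζ.2‖ₑ :=
    ((measurable_kpSlice hf hg).comp (measurable_prodMk_right (y := (t, ζ)))).enorm
  have hsupp : ∀ ξ₁ ∉ Ioo (-μ) μ, ‖kpSlice f g ξ₁ (ζ.1 - ξ₁) t ζ.2‖ₑ = 0 := fun ξ₁ hξ₁ => by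
    have hf_zero (z : E2) : f (ξ₁, z) = 0 := by_contra fun h => hξ₁ (abs_lt.1 (hfs _ h))
    simp [kpSlice_eq_integral, hf_zero]
  calc ‖prodHat f g t ζ‖ₑ ^ 2 ≤ (∫⁻ ξ₁, ‖kpSlice f g ξ₁ (ζ.1 - ξ₁) t ζ.2‖ₑ) ^ 2 := by
        gcongr; exact enorm_prodHat_le_lintegral_enorm_kpSlice f g t ζ
    _ ≤ volume (Ioo (-μ) μ) * ∫⁻ ξ₁, ‖kpSlice f g ξ₁ (ζ.1 - ξ₁) t ζ.2‖ₑ ^ 2 :=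
        sq_lintegral_le_measure_mul_lintegral_sq hmeas.aemeasurable hsupp
    _ = _ := by rw [Real.volume_Ioo, sub_neg_eq_add, two_mul]

lemma lintegral_lintegral_enorm_kpSlice_sq_le (hf : Measurable f) (hg : Measurable g)
    (hfs : ∀ ζ, f ζ ≠ 0 → |ζ.1| < μ) :
    ∫⁻ ξ₁, ∫⁻ q : ℝ × (ℝ × E2), ‖kpSlice f g ξ₁ (q.2.1 - ξ₁) q.1 q.2.2‖ₑ ^ 2 ≤
      ENNReal.ofReal (2 * π ^ 2 * μ) * ((∫⁻ ζ, ‖f ζ‖ₑ ^ 2) * ∫⁻ ζ, ‖g ζ‖ₑ ^ 2) := by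
  have hslice (ξ₁ : ℝ) (hξ₁ : ξ₁ ≠ 0) :
      ∫⁻ q : ℝ × (ℝ × E2), ‖kpSlice f g ξ₁ (q.2.1 - ξ₁) q.1 q.2.2‖ₑ ^ 2 ≤
        ENNReal.ofReal (2 * π ^ 2 * μ) * ((∫⁻ z, ‖f (ξ₁, z)‖ₑ ^ 2) * ∫⁻ ζ, ‖g ζ‖ₑ ^ 2) := by
    refine (lintegral_prod_enorm_kpSlice_sq_le hf hg hξ₁).trans ?_
    by_cases hlow : |ξ₁| < μ
    · gcongr
    · have hf_zero (z : E2) : f (ξ₁, z) = 0 := by_contra fun h => hlow (hfs _ h)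
      simp [hf_zero]
  have hf_sq : Measurable fun ξ₁ => ∫⁻ z, ‖f (ξ₁, z)‖ₑ ^ 2 :=
    (hf.enorm.pow_const 2).lintegral_prod_right'
  calc _ ≤ ∫⁻ ξ₁, ENNReal.ofReal (2 * π ^ 2 * μ) *
          ((∫⁻ z, ‖f (ξ₁, z)‖ₑ ^ 2) * ∫⁻ ζ, ‖g ζ‖ₑ ^ 2) :=
        lintegral_mono_ae ((Measure.ae_ne volume 0).mono hslice)
    _ = _ := by
        rw [lintegral_const_mul _ (hf_sq.mul_const _), lintegral_mul_const _ hf_sq,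
          Measure.volume_eq_prod ℝ E2, lintegral_prod _ (hf.enorm.pow_const 2).aemeasurable]

theorem lintegral_enorm_prodHat_sq_le (hf : Measurable f) (hg : Measurable g)
    (hfs : ∀ ζ, f ζ ≠ 0 → |ζ.1| < μ) :
    ∫⁻ q : ℝ × (ℝ × E2), ‖prodHat f g q.1 q.2‖ₑ ^ 2 ≤
      ENNReal.ofReal (2 * π * μ) ^ 2 * ((∫⁻ ζ, ‖f ζ‖ₑ ^ 2) * ∫⁻ ζ, ‖g ζ‖ₑ ^ 2) := by
  have hmeas : Measurable fun p : (ℝ × (ℝ × E2)) × ℝ =>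
      ‖kpSlice f g p.2 (p.1.2.1 - p.2) p.1.1 p.1.2.2‖ₑ ^ 2 :=
    ((measurable_kpSlice hf hg).comp measurable_swap).enorm.pow_const 2
  have hconst : ENNReal.ofReal (2 * μ) * ENNReal.ofReal (2 * π ^ 2 * μ) =
      ENNReal.ofReal (2 * π * μ) ^ 2 := by
    rw [ENNReal.ofReal_mul two_pos.le, ENNReal.ofReal_mul (p := 2 * π ^ 2) (by positivity),
      ENNReal.ofReal_mul (p := 2 * π) (by positivity), mul_mul_mul_comm, mul_pow, ← sq,
      ← ENNReal.ofReal_mul two_pos.le, ← ENNReal.ofReal_pow (p := 2 * π) (by positivity)]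
    ring_nf
  calc ∫⁻ q : ℝ × (ℝ × E2), ‖prodHat f g q.1 q.2‖ₑ ^ 2
      ≤ ∫⁻ q : ℝ × (ℝ × E2), ENNReal.ofReal (2 * μ) *
          ∫⁻ ξ₁, ‖kpSlice f g ξ₁ (q.2.1 - ξ₁) q.1 q.2.2‖ₑ ^ 2 :=
        lintegral_mono fun q => enorm_prodHat_sq_le hf hg hfs q.1 q.2
    _ = ENNReal.ofReal (2 * μ) * ∫⁻ ξ₁, ∫⁻ q : ℝ × (ℝ × E2),
          ‖kpSlice f g ξ₁ (q.2.1 - ξ₁) q.1 q.2.2‖ₑ ^ 2 := by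
        rw [lintegral_const_mul' _ _ ENNReal.ofReal_ne_top,
          lintegral_lintegral_swap hmeas.aemeasurable]
    _ ≤ ENNReal.ofReal (2 * μ) * (ENNReal.ofReal (2 * π ^ 2 * μ) *
          ((∫⁻ ζ, ‖f ζ‖ₑ ^ 2) * ∫⁻ ζ, ‖g ζ‖ₑ ^ 2)) := by
        gcongr; exact lintegral_lintegral_enorm_kpSlice_sq_le hf hg hfs
    _ = _ := by rw [← mul_assoc, hconst]

theorem eLpNorm_prodHat_le_of_measurable (hf : Measurable f) (hg : Measurable g)
    (hfs : ∀ ζ, f ζ ≠ 0 → |ζ.1| < μ) :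
    eLpNorm (fun q : ℝ × (ℝ × E2) => prodHat f g q.1 q.2) 2 volume ≤
      ENNReal.ofReal (2 * π * μ) * eLpNorm f 2 volume * eLpNorm g 2 volume := by
  rw [← ENNReal.pow_le_pow_left_iff two_ne_zero, mul_pow, mul_pow, mul_assoc]
  simp only [eLpNorm_two_sq_eq_lintegral]
  exact lintegral_enorm_prodHat_sq_le hf hg hfs

end Measurable

theorem kp3d_bilinear_lowhigh_general {μ : ℝ} {f g : ℝ × E2 → ℂ}
    (hf : AEStronglyMeasurable f volume) (hg : AEStronglyMeasurable g volume)
    (hfs : ∀ᵐ ζ : ℝ × E2, f ζ ≠ 0 → |ζ.1| < μ) :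
    eLpNorm (fun q : ℝ × (ℝ × E2) => prodHat f g q.1 q.2) 2 volume ≤
      ENNReal.ofReal (2 * π * μ) * eLpNorm f 2 volume * eLpNorm g 2 volume := by
  obtain ⟨f', hf', hff'⟩ := hf
  obtain ⟨g', hg', hgg'⟩ := hg
  let lowFreq : Set (ℝ × E2) := {ζ | |ζ.1| < μ}
  have measurableSet_lowFreq : MeasurableSet lowFreq :=
    measurableSet_lt (by fun_prop) measurable_const
  have hf_ae : f =ᵐ[volume] lowFreq.indicator f' := by
    filter_upwards [hff', hfs] with ζ hζ hζs
    by_cases hlow : ζ ∈ lowFreq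
    · rw [indicator_of_mem hlow, hζ]
    · rw [indicator_of_notMem hlow]
      exact by_contra fun h => hlow (hζs h)
  rw [prodHat_congr_ae hf_ae hgg', eLpNorm_congr_ae hf_ae, eLpNorm_congr_ae hgg']
  exact eLpNorm_prodHat_le_of_measurable (hf'.measurable.indicator measurableSet_lowFreq)
    hg'.measurable fun ζ hζ => (mem_of_indicator_ne_zero hζ : ζ ∈ lowFreq)

end KP

theorem kp3d_bilinear_lowhigh :
    ∃ c : ℝ, 0 < c ∧ ∀ μ lam : ℝ, 0 < μ → 0 < lam →
      ∀ f g : ℝ × E2 → ℂ, MemLp f 2 volume → MemLp g 2 volume →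
        (∀ ζ : ℝ × E2, f ζ ≠ 0 → |ζ.1| < μ) →
        (∀ ζ : ℝ × E2, g ζ ≠ 0 → lam < |ζ.1|) →
        eLpNorm (fun q : ℝ × (ℝ × E2) => prodHat f g q.1 q.2) 2 volume ≤
          ENNReal.ofReal (c * μ) * eLpNorm f 2 volume * eLpNorm g 2 volume :=
  ⟨2 * Real.pi, by positivity, fun _ _ _ _ _ _ hf hg hfs _ =>
    kp3d_bilinear_lowhigh_general hf.1 hg.1 (.of_forall hfs)⟩
end
end

section
/- Let d ≥ 1, let f, g : ℝ^d → ℂ be measurable and let h, l : ℝ^d → [0,∞] be measurable. Then, as an inequality in [0,∞], ∫_{ℝ^d} | ∫_{ℝ^d} f(x) h(x) g(z−x) l(z−x) dx |² dz ≤ ∫_{ℝ^d} ∫_{ℝ^d} ( ∫_{ℝ^d} h(z−y) l(z−x) dz ) |f(x)|² h(x) |g(y)|² l(y) dx dy; in other words ‖ (f h) ∗ (g l) ‖_{L²}² is bounded by the right-hand side. -/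
/-!
STATEMENT 8: Cauchy–Schwarz estimate for weighted convolutions on ℝ^d
(with weights h, l taking values in [0,∞], hence formulated with ∫⁻ and
the pointwise size |f(x)| h(x) |g(z−x)| l(z−x) of the integrand):
∫ |∫ f(x)h(x)g(z−x)l(z−x) dx|² dz
  ≤ ∫∫ (∫ h(z−y)l(z−x) dz) |f(x)|² h(x) |g(y)|² l(y) dx dy.
-/

noncomputable section

open MeasureTheory
open scoped ENNReal

/-!
Cauchy–Schwarz with respect to the measure `h(x) l(z - x) dx` gives the pointwise bound
`((F h) ∗ (G l))² ≤ ((F² h) ∗ l) · (h ∗ (G² l))`. Writing the last factor as `(G² l) ∗ h`, Tonelli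
turns the integral over `z` of the right-hand side into the interaction integral.
-/

section CauchySchwarz

variable {α : Type*} [MeasurableSpace α] {μ : Measure α} {a b w : α → ℝ≥0∞}

lemma sq_lintegral_mul_le (ha : AEMeasurable a μ) (hb : AEMeasurable b μ) :
    (∫⁻ x, a x * b x ∂μ) ^ 2 ≤ (∫⁻ x, a x ^ 2 ∂μ) * ∫⁻ x, b x ^ 2 ∂μ := by
  have holder : ∫⁻ x, a x * b x ∂μ ≤
      (∫⁻ x, a x ^ 2 ∂μ) ^ (1 / 2 : ℝ) * (∫⁻ x, b x ^ 2 ∂μ) ^ (1 / 2 : ℝ) := by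
    simpa using ENNReal.lintegral_mul_le_Lp_mul_Lq μ Real.HolderConjugate.two_two ha hb
  have sq_sqrt (t : ℝ≥0∞) : (t ^ (1 / 2 : ℝ)) ^ 2 = t := by
    simp [← ENNReal.rpow_mul_natCast]
  calc (∫⁻ x, a x * b x ∂μ) ^ 2
      ≤ ((∫⁻ x, a x ^ 2 ∂μ) ^ (1 / 2 : ℝ) * (∫⁻ x, b x ^ 2 ∂μ) ^ (1 / 2 : ℝ)) ^ 2 := by gcongr
    _ = (∫⁻ x, a x ^ 2 ∂μ) * ∫⁻ x, b x ^ 2 ∂μ := by rw [mul_pow, sq_sqrt, sq_sqrt]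

lemma sq_lintegral_weight_mul_le (hw : AEMeasurable w μ) (ha : AEMeasurable a μ)
    (hb : AEMeasurable b μ) :
    (∫⁻ x, w x * (a x * b x) ∂μ) ^ 2 ≤
      (∫⁻ x, w x * a x ^ 2 ∂μ) * ∫⁻ x, w x * b x ^ 2 ∂μ := by
  have hac : μ.withDensity w ≪ μ := withDensity_absolutelyContinuous μ w
  have lintegral_weight {k : α → ℝ≥0∞} (hk : AEMeasurable k μ) :
      ∫⁻ x, k x ∂μ.withDensity w = ∫⁻ x, w x * k x ∂μ :=
    lintegral_withDensity_eq_lintegral_mul₀ hw hk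
  rw [← lintegral_weight (ha.fun_mul hb), ← lintegral_weight (ha.pow_const 2),
    ← lintegral_weight (hb.pow_const 2)]
  exact sq_lintegral_mul_le (ha.mono_ac hac) (hb.mono_ac hac)

end CauchySchwarz

section Convolution

variable {E : Type*} [MeasurableSpace E] {μ : Measure E} {F G h l A B : E → ℝ≥0∞}

section AddGroup

variable [AddGroup E] [MeasurableNeg E]

lemma sq_lconvolution_mul_mul_le [MeasurableAdd E] (hF : Measurable F) (hG : Measurable G)
    (hh : Measurable h) (hl : Measurable l) (z : E) :
    ((F * h) ⋆ₗ[μ] (G * l)) z ^ 2 ≤ ((F ^ 2 * h) ⋆ₗ[μ] l) z * (h ⋆ₗ[μ] (G ^ 2 * l)) z := by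
  have hw : Measurable fun x ↦ h x * l (-x + z) := by fun_prop
  have hGz : Measurable fun x ↦ G (-x + z) := by fun_prop
  convert sq_lintegral_weight_mul_le (μ := μ) hw.aemeasurable hF.aemeasurable hGz.aemeasurable
    using 2 <;>
  · refine lintegral_congr fun x ↦ ?_
    simp only [Pi.mul_apply, Pi.pow_apply]
    ring

lemma lintegral_lconvolution_mul_lconvolution [MeasurableAdd₂ E] [SFinite μ]
    (hA : Measurable A) (hB : Measurable B) (hh : Measurable h) (hl : Measurable l) :
    ∫⁻ z, (A ⋆ₗ[μ] l) z * (B ⋆ₗ[μ] h) z ∂μ =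
      ∫⁻ x, ∫⁻ y, (∫⁻ z, h (-y + z) * l (-x + z) ∂μ) * (A x * B y) ∂μ ∂μ := by
  calc ∫⁻ z, (A ⋆ₗ[μ] l) z * (B ⋆ₗ[μ] h) z ∂μ
      = ∫⁻ z, ∫⁻ x, ∫⁻ y, A x * l (-x + z) * (B y * h (-y + z)) ∂μ ∂μ ∂μ := by
        refine lintegral_congr fun z ↦ (lintegral_lintegral_mul ?_ ?_).symm <;> fun_prop
    _ = ∫⁻ x, ∫⁻ z, ∫⁻ y, A x * l (-x + z) * (B y * h (-y + z)) ∂μ ∂μ ∂μ :=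
        lintegral_lintegral_swap (by fun_prop)
    _ = ∫⁻ x, ∫⁻ y, ∫⁻ z, A x * l (-x + z) * (B y * h (-y + z)) ∂μ ∂μ ∂μ :=
        lintegral_congr fun x ↦ lintegral_lintegral_swap (by fun_prop)
    _ = ∫⁻ x, ∫⁻ y, (∫⁻ z, h (-y + z) * l (-x + z) ∂μ) * (A x * B y) ∂μ ∂μ := by
        refine lintegral_congr fun x ↦ lintegral_congr fun y ↦ ?_
        rw [← lintegral_mul_const _ (by fun_prop)]
        exact lintegral_congr fun z ↦ by ring

end AddGroup

theorem weighted_convolution_cauchy_schwarz_general [AddCommGroup E] [MeasurableAdd₂ E]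
    [MeasurableNeg E] [SFinite μ] [μ.IsAddLeftInvariant] [μ.IsNegInvariant]
    (hF : Measurable F) (hG : Measurable G) (hh : Measurable h) (hl : Measurable l) :
    ∫⁻ z, ((F * h) ⋆ₗ[μ] (G * l)) z ^ 2 ∂μ ≤
      ∫⁻ x, ∫⁻ y, (∫⁻ z, h (z - y) * l (z - x) ∂μ) *
        (F x ^ 2 * h x * (G y ^ 2 * l y)) ∂μ ∂μ := by
  have hA : Measurable (F ^ 2 * h) := (hF.pow_const 2).mul hh
  have hB : Measurable (G ^ 2 * l) := (hG.pow_const 2).mul hl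
  calc ∫⁻ z, ((F * h) ⋆ₗ[μ] (G * l)) z ^ 2 ∂μ
      ≤ ∫⁻ z, ((F ^ 2 * h) ⋆ₗ[μ] l) z * (h ⋆ₗ[μ] (G ^ 2 * l)) z ∂μ :=
        lintegral_mono (sq_lconvolution_mul_mul_le hF hG hh hl)
    _ = ∫⁻ z, ((F ^ 2 * h) ⋆ₗ[μ] l) z * ((G ^ 2 * l) ⋆ₗ[μ] h) z ∂μ := by
        rw [lconvolution_comm (f := h)]
    _ = ∫⁻ x, ∫⁻ y, (∫⁻ z, h (z - y) * l (z - x) ∂μ) *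
          (F x ^ 2 * h x * (G y ^ 2 * l y)) ∂μ ∂μ := by
        simpa only [neg_add_eq_sub, Pi.mul_apply, Pi.pow_apply] using
          lintegral_lconvolution_mul_lconvolution (μ := μ) hA hB hh hl

end Convolution

theorem weighted_convolution_cauchy_schwarz (d : ℕ) (hd : 1 ≤ d)
    (f g : EuclideanSpace ℝ (Fin d) → ℂ) (h l : EuclideanSpace ℝ (Fin d) → ℝ≥0∞)
    (hf : Measurable f) (hg : Measurable g) (hh : Measurable h) (hl : Measurable l) :
    ∫⁻ z, (∫⁻ x, (‖f x‖₊ : ℝ≥0∞) * h x * (‖g (z - x)‖₊ : ℝ≥0∞) * l (z - x)) ^ 2 ∂volume ≤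
      ∫⁻ x, ∫⁻ y, (∫⁻ z, h (z - y) * l (z - x)) *
        ((‖f x‖₊ : ℝ≥0∞) ^ 2 * h x * ((‖g y‖₊ : ℝ≥0∞) ^ 2 * l y)) ∂volume ∂volume := by
  simpa only [lconvolution_def, Pi.mul_apply, neg_add_eq_sub, enorm_eq_nnnorm, mul_assoc] using
    weighted_convolution_cauchy_schwarz_general (μ := volume) hf.enorm hg.enorm hh hl
end
end

section
/- Let m : ℝ² → ℂ be bounded, measurable and even (m(−s) = m(s) for all s ∈ ℝ²). For Schwartz functions u, v, w : ℝ×ℝ² → ℂ define the trilinear form I_m(u,v,w) = ∫_{(ℝ×ℝ²)²} m( (η₁/ξ₁ − η₂/ξ₂)/(ξ₁+ξ₂) ) û(ξ₁,η₁) v̂(ξ₂,η₂) ŵ(−ξ₁−ξ₂, −η₁−η₂) dξ₁ dη₁ dξ₂ dη₂ (the integrand is defined almost everywhere and the integral converges absolutely). Then I_m is fully symmetric: I_m(u,v,w) = I_m(σ(u,v,w)) for every permutation σ of the three arguments. -/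
/-!
STATEMENT 10: full symmetry of the trilinear form
I_m(u,v,w) = ∫∫ m((η₁/ξ₁ − η₂/ξ₂)/(ξ₁+ξ₂)) û(ζ₁) v̂(ζ₂) ŵ(−ζ₁−ζ₂) dζ₁ dζ₂
for bounded measurable even m : ℝ² → ℂ and Schwartz u, v, w:
I_m(u,v,w) = I_m(σ(u,v,w)) for every permutation σ of the three arguments.
-/

noncomputable section

open MeasureTheory

/-- (Nonunitary) Fourier transform on ℝ × ℝ². -/
def ft (f : ℝ × E2 → ℂ) (ζ : ℝ × E2) : ℂ :=
  ∫ z : ℝ × E2, Complex.exp (-Complex.I * ((z.1 * ζ.1 + inner ℝ z.2 ζ.2 : ℝ) : ℂ)) * f z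

/-- The trilinear form I_m(u,v,w). -/
def trilin (m : E2 → ℂ) (u v w : SchwartzMap (ℝ × E2) ℂ) : ℂ :=
  ∫ ζ₁ : ℝ × E2, ∫ ζ₂ : ℝ × E2,
    m ((ζ₁.1 + ζ₂.1)⁻¹ • (ζ₁.1⁻¹ • ζ₁.2 - ζ₂.1⁻¹ • ζ₂.2)) *
      ft (fun z => u z) ζ₁ * ft (fun z => v z) ζ₂ *
        ft (fun z => w z) (-(ζ₁.1 + ζ₂.1), -(ζ₁.2 + ζ₂.2))

/-!
The form is an integral over triples `ζ₁ + ζ₂ + ζ₃ = 0` in `ℝ × ℝ²` of the product of the three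
Fourier transforms against a kernel in `(ζ₁, ζ₂)`. Such a form is symmetric as soon as its kernel
is unchanged, almost everywhere, by `(ζ₁, ζ₂) ↦ (ζ₂, ζ₁)` and `(ζ₁, ζ₂) ↦ (ζ₁, ζ₃)`: the first is
Fubini's theorem, the second the measure-preserving substitution `ζ₂ ↦ -(ζ₁ + ζ₂)`, and the two
adjacent transpositions generate the symmetric group. Both changes of variable multiply the argument
of `m` by `-1`, the second one off the null set where some `ξᵢ` vanishes, and `m` is even.
-/

theorem apply_comp_perm_of_apply_comp_swap {n : ℕ} {α β : Type*} {F : (Fin (n + 1) → α) → β}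
    (hF : ∀ (i : Fin n) p, F (p ∘ Equiv.swap i.castSucc i.succ) = F p)
    (σ : Equiv.Perm (Fin (n + 1))) (p : Fin (n + 1) → α) : F (p ∘ σ) = F p := by
  have hσ : σ ∈ Submonoid.closure (Set.range fun i : Fin n ↦ Equiv.swap i.castSucc i.succ) := by
    rw [Equiv.Perm.mclosure_swap_castSucc_succ]
    exact Submonoid.mem_top σ
  induction hσ using Submonoid.closure_induction generalizing p with
  | mem _ hτ =>
    obtain ⟨i, rfl⟩ := hτ
    exact hF i p
  | one => rfl
  | mul τ τ' _ _ ihτ ihτ' => exact (ihτ' (p ∘ τ)).trans (ihτ p)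

theorem memLp_top_comp_quasiMeasurePreserving {X Y E : Type*} [MeasurableSpace X]
    [MeasurableSpace Y] [NormedAddCommGroup E] {μ : Measure X} {ν : Measure Y} {f : Y → E}
    {φ : X → Y} (hf : MemLp f ⊤ ν) (hφ : Measure.QuasiMeasurePreserving φ μ ν) :
    MemLp (f ∘ φ) ⊤ μ := by
  have hf_map : AEStronglyMeasurable f (μ.map φ) :=
    hf.aestronglyMeasurable.mono_ac hφ.absolutelyContinuous
  refine (memLp_map_measure_iff hf_map hφ.aemeasurable).1 ⟨hf_map, ?_⟩
  calc eLpNorm f ⊤ (μ.map φ) ≤ eLpNorm f ⊤ ν := by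
        simpa only [eLpNorm_exponent_top] using
          eLpNormEssSup_mono_measure f hφ.absolutelyContinuous
    _ < ⊤ := hf.eLpNorm_lt_top

section ZeroSumForm

variable {G 𝕜 : Type*} [AddCommGroup G] [MeasurableSpace G] [RCLike 𝕜]

/-- The trilinear form with kernel `k` obtained by integrating `f x * g y * h z` over the triples
with `x + y + z = 0`, which are parametrised by `(x, y)`. It is an iterated integral. -/
def zeroSumForm (μ : Measure G) (k : G → G → 𝕜) (f g h : G → 𝕜) : 𝕜 :=
  ∫ x, ∫ y, k x y * f x * g y * h (-(x + y)) ∂μ ∂μ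

variable {μ : Measure G} [μ.IsAddLeftInvariant] [μ.IsNegInvariant] {k : G → G → 𝕜}

theorem zeroSumForm_swap_right [MeasurableAdd G] [MeasurableNeg G]
    (hreflect : ∀ᵐ x ∂μ, ∀ᵐ y ∂μ, k x (-(x + y)) = k x y) (f g h : G → 𝕜) :
    zeroSumForm μ k f h g = zeroSumForm μ k f g h := by
  refine integral_congr_ae (hreflect.mono fun x hx ↦ ?_)
  calc ∫ y, k x y * f x * h y * g (-(x + y)) ∂μ
      = ∫ y, k x (-x - y) * f x * h (-x - y) * g (-(x + (-x - y))) ∂μ :=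
        (integral_sub_left_eq_self _ μ (-x)).symm
    _ = ∫ y, k x y * f x * g y * h (-(x + y)) ∂μ := by
        refine integral_congr_ae (hx.mono fun y hy ↦ ?_)
        have hy_third : -(x + -(x + y)) = y := by abel
        simp only [← neg_add', hy, hy_third, mul_right_comm _ (g y)]

variable [MeasurableAdd₂ G] [MeasurableNeg G] [SFinite μ]

theorem quasiMeasurePreserving_neg_add :
    Measure.QuasiMeasurePreserving (fun z : G × G ↦ -(z.1 + z.2)) (μ.prod μ) μ :=
  (Measure.measurePreserving_neg μ).quasiMeasurePreserving.comp (quasiMeasurePreserving_add μ μ)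

variable {f g h : G → 𝕜}

theorem integrable_zeroSumForm_integrand (hk : MemLp (Function.uncurry k) ⊤ (μ.prod μ))
    (hf : Integrable f μ) (hg : Integrable g μ) (hh : MemLp h ⊤ μ) :
    Integrable (fun z : G × G ↦ k z.1 z.2 * f z.1 * g z.2 * h (-(z.1 + z.2))) (μ.prod μ) := by
  have hfg : Integrable (fun z : G × G ↦ f z.1 * g z.2) (μ.prod μ) := hf.mul_prod hg
  have hh' : MemLp (fun z : G × G ↦ h (-(z.1 + z.2))) ⊤ (μ.prod μ) :=
    memLp_top_comp_quasiMeasurePreserving hh quasiMeasurePreserving_neg_add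
  refine ((hfg.mul_of_top_right hk).mul_of_top_left hh').congr (.of_forall fun z ↦ ?_)
  simp only [Pi.mul_apply, Function.uncurry, mul_assoc]

theorem zeroSumForm_swap_left (hk : MemLp (Function.uncurry k) ⊤ (μ.prod μ))
    (hswap : ∀ x y, k y x = k x y) (hf : Integrable f μ) (hg : Integrable g μ) (hh : MemLp h ⊤ μ) :
    zeroSumForm μ k g f h = zeroSumForm μ k f g h := by
  calc zeroSumForm μ k g f h
      = ∫ y, ∫ x, k x y * g x * f y * h (-(x + y)) ∂μ ∂μ :=
        integral_integral_swap (integrable_zeroSumForm_integrand hk hg hf hh)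
    _ = zeroSumForm μ k f g h := by
        refine integral_congr_ae (.of_forall fun x ↦ integral_congr_ae (.of_forall fun y ↦ ?_))
        simp only [hswap x y, add_comm y x, mul_right_comm]

theorem zeroSumForm_perm (hk : MemLp (Function.uncurry k) ⊤ (μ.prod μ))
    (hswap : ∀ x y, k y x = k x y) (hreflect : ∀ᵐ x ∂μ, ∀ᵐ y ∂μ, k x (-(x + y)) = k x y)
    {F : Fin 3 → G → 𝕜} (hF_int : ∀ i, Integrable (F i) μ) (hF_top : ∀ i, MemLp (F i) ⊤ μ)
    (σ : Equiv.Perm (Fin 3)) :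
    zeroSumForm μ k (F (σ 0)) (F (σ 1)) (F (σ 2)) = zeroSumForm μ k (F 0) (F 1) (F 2) := by
  refine apply_comp_perm_of_apply_comp_swap
    (F := fun p : Fin 3 → Fin 3 ↦ zeroSumForm μ k (F (p 0)) (F (p 1)) (F (p 2)))
    (fun i p ↦ ?_) σ id
  fin_cases i
  · exact zeroSumForm_swap_left hk hswap (hF_int _) (hF_int _) (hF_top _)
  · exact zeroSumForm_swap_right hreflect _ _ _

end ZeroSumForm

section SlopeDiff

variable {K V : Type*} [Field K] [AddCommGroup V] [Module K V]

/-- The argument `(η₁/ξ₁ - η₂/ξ₂)/(ξ₁ + ξ₂)` of the multiplier at `ζᵢ = (ξᵢ, ηᵢ)`, with the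
convention `0⁻¹ = 0` where a denominator vanishes. -/
def slopeDiff (ζ₁ ζ₂ : K × V) : V :=
  (ζ₁.1 + ζ₂.1)⁻¹ • (ζ₁.1⁻¹ • ζ₁.2 - ζ₂.1⁻¹ • ζ₂.2)

theorem slopeDiff_swap (ζ₁ ζ₂ : K × V) : slopeDiff ζ₂ ζ₁ = -slopeDiff ζ₁ ζ₂ := by
  rw [slopeDiff, slopeDiff, ← smul_neg, neg_sub, add_comm]

theorem slopeDiff_neg_add {ζ₁ ζ₂ : K × V} (h₁ : ζ₁.1 ≠ 0) (h₂ : ζ₂.1 ≠ 0)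
    (h₁₂ : ζ₁.1 + ζ₂.1 ≠ 0) : slopeDiff ζ₁ (-(ζ₁ + ζ₂)) = -slopeDiff ζ₁ ζ₂ := by
  have hsum : ζ₁.1 + -(ζ₁.1 + ζ₂.1) = -ζ₂.1 := by ring
  simp only [slopeDiff, Prod.fst_neg, Prod.snd_neg, Prod.fst_add, Prod.snd_add, hsum, inv_neg]
  match_scalars
  · field_simp
    ring
  · field_simp

variable [MeasurableSpace K] [MeasurableSpace V]

theorem measurable_slopeDiff [MeasurableAdd₂ K] [MeasurableInv K] [MeasurableSub₂ V]
    [MeasurableSMul₂ K V] : Measurable fun ζ : (K × V) × (K × V) ↦ slopeDiff ζ.1 ζ.2 := by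
  unfold slopeDiff
  fun_prop

theorem ae_ae_slopeDiff_neg_add (ν : Measure K) [NullSingletonClass ν] (μ : Measure V)
    [SFinite μ] :
    ∀ᵐ ζ₁ ∂ν.prod μ, ∀ᵐ ζ₂ ∂ν.prod μ, slopeDiff ζ₁ (-(ζ₁ + ζ₂)) = -slopeDiff ζ₁ ζ₂ := by
  have hne (c : K) : ∀ᵐ ζ ∂ν.prod μ, ζ.1 ≠ c := Measure.quasiMeasurePreserving_fst.ae (ν.ae_ne c)
  filter_upwards [hne 0] with ζ₁ h₁
  filter_upwards [hne 0, hne (-ζ₁.1)] with ζ₂ h₂ h₁₂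
  exact slopeDiff_neg_add h₁ h₂ fun h ↦ h₁₂ (eq_neg_of_add_eq_zero_right h)

end SlopeDiff

section Fourier

open scoped SchwartzMap FourierTransform

variable {V W : Type*} [NormedAddCommGroup V] [InnerProductSpace ℝ V] [FiniteDimensional ℝ V]
  [MeasurableSpace V] [BorelSpace V] [NormedAddCommGroup W] [InnerProductSpace ℝ W]
  [FiniteDimensional ℝ W] [MeasurableSpace W] [BorelSpace W]

theorem exists_schwartzMap_eq_integral_exp_inner (u : 𝓢(V, ℂ)) :
    ∃ U : 𝓢(V, ℂ), ∀ ζ, U ζ = ∫ z, Complex.exp (-Complex.I * (inner ℝ z ζ : ℝ)) * u z := by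
  have hpi : (2 * Real.pi)⁻¹ ≠ 0 := by positivity
  let scale : V ≃L[ℝ] V := ContinuousLinearEquiv.smulLeft (Units.mk0 (2 * Real.pi)⁻¹ hpi)
  refine ⟨SchwartzMap.compCLMOfContinuousLinearEquiv ℂ scale (𝓕 u), fun ζ ↦ ?_⟩
  have hscale (z : V) : -2 * Real.pi * inner ℝ z (scale ζ) = -inner ℝ z ζ := by
    change -2 * Real.pi * inner ℝ z ((2 * Real.pi)⁻¹ • ζ) = _
    rw [inner_smul_right]
    field_simp
  rw [SchwartzMap.compCLMOfContinuousLinearEquiv_apply, Function.comp_apply,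
    SchwartzMap.fourier_coe, Real.fourier_eq']
  congr! 3 with z
  rw [hscale, Complex.ofReal_neg, neg_mul, neg_mul, mul_comm]

theorem exists_schwartzMap_eq_integral_exp_inner_prod (u : 𝓢(V × W, ℂ)) :
    ∃ U : 𝓢(V × W, ℂ), ∀ ζ, U ζ =
      ∫ z : V × W, Complex.exp (-Complex.I * (inner ℝ z.1 ζ.1 + inner ℝ z.2 ζ.2 : ℝ)) * u z := by
  let e : WithLp 2 (V × W) ≃L[ℝ] V × W := WithLp.prodContinuousLinearEquiv 2 ℝ V W
  obtain ⟨U, hU⟩ := exists_schwartzMap_eq_integral_exp_inner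
    (SchwartzMap.compCLMOfContinuousLinearEquiv ℂ e u)
  refine ⟨SchwartzMap.compCLMOfContinuousLinearEquiv ℂ e.symm U, fun ζ ↦ ?_⟩
  rw [← (WithLp.volume_preserving_ofLp V W).integral_comp
    (WithLp.homeomorphProd 2 V W).measurableEmbedding]
  exact hU (e.symm ζ)

theorem exists_schwartzMap_eq_ft (u : 𝓢(ℝ × E2, ℂ)) : ∃ U : 𝓢(ℝ × E2, ℂ), ⇑U = ft u := by
  obtain ⟨U, hU⟩ := exists_schwartzMap_eq_integral_exp_inner_prod u
  refine ⟨U, funext fun ζ ↦ (hU ζ).trans ?_⟩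
  simp only [ft, Real.inner_apply]

theorem integrable_ft (u : 𝓢(ℝ × E2, ℂ)) : Integrable (ft u) (volume.prod volume) := by
  obtain ⟨U, hU⟩ := exists_schwartzMap_eq_ft u
  exact hU ▸ U.integrable

theorem memLp_top_ft (u : 𝓢(ℝ × E2, ℂ)) : MemLp (ft u) ⊤ (volume.prod volume) := by
  obtain ⟨U, hU⟩ := exists_schwartzMap_eq_ft u
  exact hU ▸ U.memLp_top _

end Fourier

theorem trilin_eq_zeroSumForm (m : E2 → ℂ) (u v w : SchwartzMap (ℝ × E2) ℂ) :
    trilin m u v w = zeroSumForm (volume.prod volume) (fun ζ₁ ζ₂ ↦ m (slopeDiff ζ₁ ζ₂))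
      (ft u) (ft v) (ft w) :=
  rfl

theorem trilin_fully_symmetric_general {V 𝕜 : Type*} [NormedAddCommGroup V]
    [NormedSpace ℝ V] [FiniteDimensional ℝ V] [MeasurableSpace V] [BorelSpace V] [RCLike 𝕜]
    (μ : Measure V) [μ.IsAddHaarMeasure] {m : V → 𝕜}
    (hm_bdd : ∃ M : ℝ, ∀ s, ‖m s‖ ≤ M) (hm : Measurable m) (hm_even : ∀ s, m (-s) = m s)
    {F : Fin 3 → ℝ × V → 𝕜} (hF_int : ∀ i, Integrable (F i) (volume.prod μ))
    (hF_top : ∀ i, MemLp (F i) ⊤ (volume.prod μ)) (σ : Equiv.Perm (Fin 3)) :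
    zeroSumForm (volume.prod μ) (fun ζ₁ ζ₂ ↦ m (slopeDiff ζ₁ ζ₂)) (F (σ 0)) (F (σ 1)) (F (σ 2)) =
      zeroSumForm (volume.prod μ) (fun ζ₁ ζ₂ ↦ m (slopeDiff ζ₁ ζ₂)) (F 0) (F 1) (F 2) := by
  obtain ⟨M, hM⟩ := hm_bdd
  refine zeroSumForm_perm ?_ (fun ζ₁ ζ₂ ↦ by rw [slopeDiff_swap, hm_even]) ?_ hF_int hF_top σ
  · exact memLp_top_of_bound (hm.comp measurable_slopeDiff).aestronglyMeasurable M
      (.of_forall fun _ ↦ hM _)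
  · filter_upwards [ae_ae_slopeDiff_neg_add volume μ] with ζ₁ hζ₁
    filter_upwards [hζ₁] with ζ₂ hζ₂
    rw [hζ₂, hm_even]

theorem trilin_fully_symmetric (m : E2 → ℂ) (hmb : ∃ M : ℝ, ∀ s : E2, ‖m s‖ ≤ M)
    (hmm : Measurable m) (hme : ∀ s : E2, m (-s) = m s)
    (f : Fin 3 → SchwartzMap (ℝ × E2) ℂ) (σ : Equiv.Perm (Fin 3)) :
    trilin m (f (σ 0)) (f (σ 1)) (f (σ 2)) = trilin m (f 0) (f 1) (f 2) := by
  simpa only [trilin_eq_zeroSumForm] using trilin_fully_symmetric_general volume hmb hmm hme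
    (fun i ↦ integrable_ft (f i)) (fun i ↦ memLp_top_ft (f i)) σ
end
end

section
/- Let 1 ≤ q ≤ ∞ and 1 ≤ p < 2. Then the space l^q l^p L² embeds continuously into the space of tempered distributions: for every Schwartz function ψ on ℝ³ there is a constant C = C(ψ, p, q) such that for every Schwartz function φ on ℝ³ one has | ∫_{ℝ³} φ ψ dx dy | ≤ C ‖φ‖_{l^q l^p L²}. -/
noncomputable section

open MeasureTheory
open scoped ENNReal

abbrev R3 := ℝ × ℝ × ℝ

/-- (Nonunitary) Fourier transform on ℝ³ = ℝ_x × ℝ²_y. -/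
def ft3 (f : R3 → ℂ) (ζ : R3) : ℂ :=
  ∫ z : R3, Complex.exp (-Complex.I *
    ((z.1 * ζ.1 + z.2.1 * ζ.2.1 + z.2.2 * ζ.2.2 : ℝ) : ℂ)) * f z

/-- The region Γ_{λ,k} = {(ξ,η) : λ ≤ |ξ| < 2λ, |η/ξ − k|_∞ ≤ λ/2}. -/
def Gam (l : ℝ) (k : ℝ × ℝ) : Set R3 :=
  {ζ : R3 | l ≤ |ζ.1| ∧ |ζ.1| < 2 * l ∧
    max |ζ.2.1 / ζ.1 - k.1| |ζ.2.2 / ζ.1 - k.2| ≤ l / 2}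

/-- Fourier projection f_{Γ_{λ,k}}: inverse Fourier transform of the
characteristic function of Γ_{λ,k} times f̂. -/
def projG (l : ℝ) (k : ℝ × ℝ) (φ : SchwartzMap R3 ℂ) (z : R3) : ℂ :=
  ∫ ζ in Gam l k, Complex.exp (Complex.I *
    ((z.1 * ζ.1 + z.2.1 * ζ.2.1 + z.2.2 * ζ.2.2 : ℝ) : ℂ)) * ft3 (fun w => φ w) ζ

/-- ℓ^p sum in ℝ≥0∞, with the usual modification for p = ∞. -/
def lpS (p : ℝ≥0∞) {ι : Type*} (f : ι → ℝ≥0∞) : ℝ≥0∞ :=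
  if p = ∞ then ⨆ i, f i else (∑' i, f i ^ p.toReal) ^ (1 / p.toReal)

/-- The norm ‖φ‖_{l^q l^p L²} = (∑_{λ∈2^ℤ} λ^{q/2} (∑_{k∈λℤ²} ‖φ_{Γ_{λ,k}}‖_{L²}^p)^{q/p})^{1/q}. -/
def lqlpNorm (q p : ℝ≥0∞) (φ : SchwartzMap R3 ℂ) : ℝ≥0∞ :=
  lpS q fun n : ℤ => ((2 : ℝ≥0∞) ^ n) ^ ((1 : ℝ) / 2) *
    lpS p fun m : ℤ × ℤ =>
      eLpNorm (projG ((2 : ℝ) ^ n) ((2 : ℝ) ^ n * (m.1 : ℝ), (2 : ℝ) ^ n * (m.2 : ℝ)) φ) 2 volume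

/-!
By Plancherel, the `L²` norm of `φ_Γ` is a constant times that of `φ̂` on `Γ`. Writing `ψ = ĥ`, the
pairing becomes `∫ φ̂ h`. The regions `Γ_{λ,k}` cover almost all frequencies, so Cauchy–Schwarz on
each region and Hölder in `k` bound the pairing by
`∑_λ λ^{-1/2} ‖h‖_{r,λ} · λ^{1/2} ‖φ̂‖_{p,λ}`, where `1/p + 1/r = 1` and `‖g‖_{r,λ}` is the `ℓ^r`
norm in `k` of `‖g‖_{L²(Γ_{λ,k})}`. Since `ℓ^p` norms decrease in `p`, one may take `q = ∞` and
`1 < p < 2`, and it remains to sum `λ^{-1/2} ‖h‖_{r,λ}`. For large `λ` it suffices that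
`‖h‖_{r,λ} ≤ ‖h‖_{L²}`. For small `λ`, interpolating between `‖h‖_{∞,λ} ≲ λ^{5/2}`, from
`|Γ_{λ,k}| ≲ λ^5`, and `‖h‖_{2,λ} ≲ λ^{1/2}`, from the measure of `λ ≤ |ξ| < 2λ`, gives
`λ^{-1/2} ‖h‖_{r,λ} ≲ λ^{2 - 4/r}`, which is summable exactly because `p < 2` means `r > 2`.
-/

open scoped FourierTransform NNReal Real SchwartzMap

section Plancherel

variable {E F : Type*} [NormedAddCommGroup E] [InnerProductSpace ℝ E] [FiniteDimensional ℝ E]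
  [MeasurableSpace E] [BorelSpace E] [NormedAddCommGroup F]

lemma continuous_fourierInv [NormedSpace ℂ F] {g : E → F} (hg : Integrable g) :
    Continuous (𝓕⁻ g) :=
  VectorFourier.fourierIntegral_continuous Real.continuous_fourierChar (L := -innerₗ E)
    (continuous_inner (𝕜 := ℝ)).neg hg

lemma integral_schwartz_smul_fourierInv [NormedSpace ℂ F] [CompleteSpace F] (s : 𝓢(E, ℂ))
    {g : E → F} (hg : Integrable g) :
    ∫ x, s x • (𝓕⁻ g) x = ∫ x, (𝓕⁻ s) x • g x := by
  have flip_neg_inner : (-innerₗ E).flip = -innerₗ E := by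
    ext x y; simp [real_inner_comm]
  have := VectorFourier.integral_bilin_fourierIntegral_eq_flip (.lsmul ℂ ℂ)
    (L := -innerₗ E) Real.continuous_fourierChar (continuous_inner (𝕜 := ℝ)).neg
    (s.integrable (μ := volume)) hg
  rw [flip_neg_inner] at this
  rw [SchwartzMap.fourierInv_coe]
  exact this.symm

variable [InnerProductSpace ℂ F] [CompleteSpace F]

lemma fourierInv_toLp_ae_eq {g : E → F} (hg1 : Integrable g) (hg2 : MemLp g 2) :
    ((𝓕⁻ (hg2.toLp g) : Lp F 2 (volume : Measure E)) : E → F) =ᵐ[volume] 𝓕⁻ g := by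
  refine ae_eq_of_integral_contDiff_smul_eq ((Lp.memLp _).locallyIntegrable one_le_two)
    (continuous_fourierInv hg1).locallyIntegrable fun u u_smooth u_supp => ?_
  have complex_supp : HasCompactSupport (Complex.ofRealCLM ∘ u) := u_supp.comp_left rfl
  let s : 𝓢(E, ℂ) := complex_supp.toSchwartzMap (by fun_prop)
  change ∫ x, u x • (𝓕⁻ (hg2.toLp g) : Lp F 2 (volume : Measure E)) x = ∫ x, u x • (𝓕⁻ g) x
  calc _ = Lp.toTemperedDistribution (𝓕⁻ (hg2.toLp g)) s := by
        simp [Lp.toTemperedDistribution_apply, s]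
    _ = ∫ x, (𝓕⁻ s) x • hg2.toLp g x := by
        rw [← Lp.fourierInv_toTemperedDistribution_eq, TemperedDistribution.fourierInv_apply,
          Lp.toTemperedDistribution_apply]
    _ = ∫ x, (𝓕⁻ s) x • g x :=
        integral_congr_ae (hg2.coeFn_toLp.mono fun x hx => congrArg _ hx)
    _ = _ := by
        rw [← integral_schwartz_smul_fourierInv s hg1]
        simp [s]

lemma eLpNorm_two_fourierInv {g : E → F} (hg1 : Integrable g) (hg2 : MemLp g 2) :
    eLpNorm (𝓕⁻ g) 2 volume = eLpNorm g 2 volume := by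
  have norm_eq : ‖(𝓕⁻ (hg2.toLp g) : Lp F 2 (volume : Measure E))‖ = ‖hg2.toLp g‖ :=
    (Lp.fourierTransformₗᵢ E F).symm.norm_map _
  rw [← eLpNorm_congr_ae (fourierInv_toLp_ae_eq hg1 hg2), ← Lp.enorm_def,
    ← eLpNorm_congr_ae hg2.coeFn_toLp, ← Lp.enorm_def, ← ofReal_norm, norm_eq, ofReal_norm]

end Plancherel

section LpSum

variable {ι : Type*}

lemma lpS_ofReal {p : ℝ} (hp : 0 ≤ p) (f : ι → ℝ≥0∞) :
    lpS (.ofReal p) f = (∑' i, f i ^ p) ^ (1 / p) := by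
  rw [lpS, if_neg ENNReal.ofReal_ne_top, ENNReal.toReal_ofReal hp]

lemma lpS_top (f : ι → ℝ≥0∞) : lpS ∞ f = ⨆ i, f i := if_pos rfl

lemma lpS_mono {p : ℝ≥0∞} {f g : ι → ℝ≥0∞} (h : f ≤ g) : lpS p f ≤ lpS p g := by
  unfold lpS
  split_ifs
  · exact iSup_mono h
  · gcongr with i
    exact h i

lemma lpS_const_mul {p : ℝ≥0∞} (hp : p ≠ 0) (c : ℝ≥0∞) (f : ι → ℝ≥0∞) :
    lpS p (fun i => c * f i) = c * lpS p f := by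
  unfold lpS
  split_ifs with hp_top
  · exact (ENNReal.mul_iSup ..).symm
  · have toReal_pos : 0 < p.toReal := ENNReal.toReal_pos hp hp_top
    simp_rw [ENNReal.mul_rpow_of_nonneg _ _ toReal_pos.le]
    rw [ENNReal.tsum_mul_left, ENNReal.mul_rpow_of_nonneg _ _ (by positivity), one_div,
      ENNReal.rpow_rpow_inv toReal_pos.ne']

lemma le_lpS {p : ℝ≥0∞} (hp : p ≠ 0) (f : ι → ℝ≥0∞) (i : ι) : f i ≤ lpS p f := by
  unfold lpS
  split_ifs with hp_top
  · exact le_iSup f i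
  · rw [one_div, ENNReal.le_rpow_inv_iff (ENNReal.toReal_pos hp hp_top)]
    exact ENNReal.le_tsum (f := fun i => f i ^ p.toReal) i

lemma lpS_rpow_toReal {p : ℝ≥0∞} (hp : p ≠ 0) (hp_top : p ≠ ∞) (f : ι → ℝ≥0∞) :
    lpS p f ^ p.toReal = ∑' i, f i ^ p.toReal := by
  rw [lpS, if_neg hp_top, one_div, ENNReal.rpow_inv_rpow (ENNReal.toReal_pos hp hp_top).ne']

lemma lpS_le_rpow_mul_lpS_rpow {p q : ℝ≥0∞} (hp : p ≠ 0) (hpq : p ≤ q) (hq_top : q ≠ ∞)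
    {f : ι → ℝ≥0∞} {B : ℝ≥0∞} (hf : ∀ i, f i ≤ B) :
    lpS q f ≤ B ^ (1 - p.toReal / q.toReal) * lpS p f ^ (p.toReal / q.toReal) := by
  have hp_top : p ≠ ∞ := ne_top_of_le_ne_top hq_top hpq
  have hq : q ≠ 0 := (hp.bot_lt.trans_le hpq).ne'
  have hq_pos : 0 < q.toReal := ENNReal.toReal_pos hq hq_top
  have toReal_le : 0 ≤ q.toReal - p.toReal := sub_nonneg.2 (ENNReal.toReal_mono hq_top hpq)
  refine (ENNReal.rpow_le_rpow_iff hq_pos).1 ?_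
  calc lpS q f ^ q.toReal = ∑' i, f i ^ (q.toReal - p.toReal) * f i ^ p.toReal := by
        simp_rw [lpS_rpow_toReal hq hq_top,
          ← ENNReal.rpow_add_of_nonneg _ _ toReal_le ENNReal.toReal_nonneg, sub_add_cancel]
    _ ≤ ∑' i, B ^ (q.toReal - p.toReal) * f i ^ p.toReal := by
        gcongr with i
        exact hf i
    _ = B ^ (q.toReal - p.toReal) * lpS p f ^ p.toReal := by
        rw [ENNReal.tsum_mul_left, lpS_rpow_toReal hp hp_top]
    _ = _ := by
        rw [ENNReal.mul_rpow_of_nonneg _ _ hq_pos.le, ← ENNReal.rpow_mul, ← ENNReal.rpow_mul,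
          sub_mul, one_mul, div_mul_cancel₀ _ hq_pos.ne']

lemma lpS_anti {p q : ℝ≥0∞} (hp : p ≠ 0) (hpq : p ≤ q) (f : ι → ℝ≥0∞) :
    lpS q f ≤ lpS p f := by
  rcases eq_or_ne q ∞ with rfl | hq_top
  · exact (lpS_top f).trans_le (iSup_le (le_lpS hp f))
  have ratio_le_one : p.toReal / q.toReal ≤ 1 :=
    div_le_one_of_le₀ (ENNReal.toReal_mono hq_top hpq) ENNReal.toReal_nonneg
  refine (lpS_le_rpow_mul_lpS_rpow hp hpq hq_top (le_lpS hp f)).trans_eq ?_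
  rw [← ENNReal.rpow_add_of_nonneg _ _ (sub_nonneg.2 ratio_le_one) (by positivity),
    sub_add_cancel, ENNReal.rpow_one]

lemma tsum_mul_le_lpS_mul_lpS {p r : ℝ} (hpr : p.HolderConjugate r) (f g : ι → ℝ≥0∞) :
    ∑' i, f i * g i ≤ lpS (.ofReal p) f * lpS (.ofReal r) g := by
  let _ : MeasurableSpace ι := ⊤
  rw [lpS_ofReal hpr.nonneg, lpS_ofReal hpr.symm.nonneg]
  simpa [lintegral_count] using ENNReal.lintegral_mul_le_Lp_mul_Lq Measure.count hpr
    (measurable_from_top (f := f)).aemeasurable (measurable_from_top (f := g)).aemeasurable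

lemma lpS_eLpNorm_restrict [Countable ι] {α E : Type*} [MeasurableSpace α] {μ : Measure α}
    [NormedAddCommGroup E] {p : ℝ≥0∞} (hp : p ≠ 0) (hp_top : p ≠ ∞) {s : ι → Set α}
    (s_meas : ∀ i, MeasurableSet (s i)) (s_disj : Pairwise (Function.onFun Disjoint s))
    (f : α → E) :
    lpS p (fun i => eLpNorm f p (μ.restrict (s i))) = eLpNorm f p (μ.restrict (⋃ i, s i)) := by
  rw [lpS, if_neg hp_top, eLpNorm_eq_lintegral_rpow_enorm_toReal hp hp_top,
    lintegral_iUnion s_meas s_disj]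
  simp_rw [eLpNorm_eq_lintegral_rpow_enorm_toReal hp hp_top, one_div,
    ENNReal.rpow_inv_rpow (ENNReal.toReal_pos hp hp_top).ne']

lemma tsum_int_ne_top_of_le_geometric {f : ℤ → ℝ≥0∞} {A B x y : ℝ≥0∞} (hA : A ≠ ∞) (hB : B ≠ ∞)
    (hx : x < 1) (hy : y < 1) (hf : ∀ n : ℕ, f n ≤ A * x ^ n)
    (hf_neg : ∀ n : ℕ, f (-n) ≤ B * y ^ n) :
    ∑' n, f n ≠ ∞ := by
  have geometric {C z : ℝ≥0∞} (hC : C ≠ ∞) (hz : z < 1) : ∑' n : ℕ, C * z ^ n ≠ ∞ := by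
    rw [ENNReal.tsum_mul_left, ENNReal.tsum_geometric]
    exact ENNReal.mul_ne_top hC (ENNReal.inv_ne_top.2 (tsub_pos_of_lt hz).ne')
  rw [tsum_of_nat_of_neg_add_one ENNReal.summable ENNReal.summable]
  refine ENNReal.add_ne_top.2 ⟨ne_top_of_le_ne_top (geometric hA hx) (ENNReal.tsum_le_tsum hf), ?_⟩
  refine ne_top_of_le_ne_top (geometric hB hy) ?_
  calc ∑' n : ℕ, f (-(n + 1)) ≤ ∑' n : ℕ, B * y ^ (n + 1) :=
        ENNReal.tsum_le_tsum fun n => mod_cast hf_neg (n + 1)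
    _ ≤ ∑' n : ℕ, B * y ^ n :=
        ENNReal.tsum_comp_le_tsum_of_injective (add_left_injective 1) fun n => B * y ^ n

end LpSum

section FourierTransformR3

instance isAddHaarMeasure_volume_prod {G H : Type*} [AddGroup G] [TopologicalSpace G]
    [MeasureSpace G] [(volume : Measure G).IsAddHaarMeasure] [SFinite (volume : Measure G)]
    [AddGroup H] [TopologicalSpace H] [MeasureSpace H] [(volume : Measure H).IsAddHaarMeasure]
    [SFinite (volume : Measure H)] [MeasurableAdd G] [MeasurableAdd H] :
    (volume : Measure (G × H)).IsAddHaarMeasure := by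
  rw [Measure.volume_eq_prod]
  infer_instance

/-- The dilation `v ↦ √(2π) v` from Euclidean space to `R3`. It intertwines Mathlib's Fourier
transform, with kernel `exp (-2πi⟪v, w⟫)`, and `ft3`, with kernel `exp (-i z·ζ)`. -/
def euclideanEquiv : EuclideanSpace ℝ (Fin 3) ≃L[ℝ] R3 :=
  LinearEquiv.toContinuousLinearEquiv
    { toFun v := (√(2 * π) * v 0, √(2 * π) * v 1, √(2 * π) * v 2)
      invFun z := !₂[z.1 / √(2 * π), z.2.1 / √(2 * π), z.2.2 / √(2 * π)]
      map_add' v w := by simp [mul_add]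
      map_smul' a v := by simp [mul_left_comm]
      left_inv v := by
        ext i
        fin_cases i <;> simp <;> field_simp
      right_inv z := by ext <;> simp <;> field_simp }

lemma dot_euclideanEquiv (v w : EuclideanSpace ℝ (Fin 3)) :
    (euclideanEquiv v).1 * (euclideanEquiv w).1 + (euclideanEquiv v).2.1 * (euclideanEquiv w).2.1 +
      (euclideanEquiv v).2.2 * (euclideanEquiv w).2.2 = 2 * π * inner ℝ v w := by
  have sq_sqrt : √(2 * π) * √(2 * π) = 2 * π := Real.mul_self_sqrt (by positivity)
  change √(2 * π) * v 0 * (√(2 * π) * w 0) + √(2 * π) * v 1 * (√(2 * π) * w 1) +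
    √(2 * π) * v 2 * (√(2 * π) * w 2) = _
  simp only [PiLp.inner_apply, Fin.sum_univ_three, RCLike.inner_apply, conj_trivial]
  linear_combination (v 0 * w 0 + v 1 * w 1 + v 2 * w 2) * sq_sqrt

instance isAddHaarMeasure_map_euclideanEquiv :
    ((volume : Measure (EuclideanSpace ℝ (Fin 3))).map euclideanEquiv).IsAddHaarMeasure :=
  euclideanEquiv.isAddHaarMeasure_map _

/-- The Jacobian of `euclideanEquiv`; its value `(2π) ^ (3 / 2)` is never needed. -/
def fourierScale : ℝ≥0 :=
  Measure.addHaarScalarFactor volume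
    ((volume : Measure (EuclideanSpace ℝ (Fin 3))).map euclideanEquiv)

lemma fourierScale_ne_zero : fourierScale ≠ 0 :=
  (Measure.addHaarScalarFactor_pos_of_isAddHaarMeasure _ _).ne'

lemma volume_eq_fourierScale_smul_map :
    (volume : Measure R3) = fourierScale •
      (volume : Measure (EuclideanSpace ℝ (Fin 3))).map euclideanEquiv :=
  Measure.isAddLeftInvariant_eq_smul _ _

lemma measurableEmbedding_euclideanEquiv : MeasurableEmbedding euclideanEquiv :=
  euclideanEquiv.toHomeomorph.measurableEmbedding

lemma integral_eq_fourierScale_mul (f : R3 → ℂ) :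
    ∫ z, f z = fourierScale * ∫ v, f (euclideanEquiv v) := by
  rw [volume_eq_fourierScale_smul_map, integral_smul_nnreal_measure,
    measurableEmbedding_euclideanEquiv.integral_map, NNReal.smul_def, Complex.real_smul]

lemma eLpNorm_two_eq_fourierScale_rpow_mul (f : R3 → ℂ) :
    eLpNorm f 2 volume =
      (fourierScale : ℝ≥0∞) ^ (1 / 2 : ℝ) * eLpNorm (f ∘ euclideanEquiv) 2 volume := by
  rw [volume_eq_fourierScale_smul_map,
    eLpNorm_smul_measure_of_ne_top' ENNReal.ofNat_ne_top,
    measurableEmbedding_euclideanEquiv.eLpNorm_map_measure, ENNReal.smul_def, smul_eq_mul,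
    ENNReal.coe_rpow_of_nonneg _ (by positivity), ENNReal.toReal_ofNat, one_div]

lemma memLp_comp_euclideanEquiv {g : R3 → ℂ} {p : ℝ≥0∞} (hg : MemLp g p) :
    MemLp (g ∘ euclideanEquiv) p := by
  have map_eq : (volume : Measure (EuclideanSpace ℝ (Fin 3))).map euclideanEquiv =
      fourierScale⁻¹ • (volume : Measure R3) := by
    rw [volume_eq_fourierScale_smul_map, inv_smul_smul₀ fourierScale_ne_zero]
  refine measurableEmbedding_euclideanEquiv.memLp_map_measure_iff.1 ?_
  rw [map_eq]
  exact hg.smul_measure ENNReal.coe_ne_top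

/-- The inverse of `ft3`, up to normalization. -/
def ift3 (g : R3 → ℂ) (z : R3) : ℂ :=
  ∫ ζ : R3, Complex.exp (Complex.I *
    ((z.1 * ζ.1 + z.2.1 * ζ.2.1 + z.2.2 * ζ.2.2 : ℝ) : ℂ)) * g ζ

lemma ft3_euclideanEquiv (f : R3 → ℂ) (w : EuclideanSpace ℝ (Fin 3)) :
    ft3 f (euclideanEquiv w) = fourierScale * 𝓕 (f ∘ euclideanEquiv) w := by
  rw [ft3, integral_eq_fourierScale_mul, Real.fourier_eq']
  congr! 3 with v
  rw [dot_euclideanEquiv, smul_eq_mul, Function.comp_apply]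
  congr 2
  push_cast
  ring

lemma ift3_euclideanEquiv (g : R3 → ℂ) (v : EuclideanSpace ℝ (Fin 3)) :
    ift3 g (euclideanEquiv v) = fourierScale * 𝓕⁻ (g ∘ euclideanEquiv) v := by
  rw [ift3, integral_eq_fourierScale_mul, Real.fourierInv_eq']
  congr! 3 with w
  rw [dot_euclideanEquiv, smul_eq_mul, Function.comp_apply, real_inner_comm]
  congr 2
  push_cast
  ring

lemma eLpNorm_two_ift3 {g : R3 → ℂ} (hg1 : Integrable g) (hg2 : MemLp g 2) :
    eLpNorm (ift3 g) 2 volume = fourierScale * eLpNorm g 2 volume := by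
  have comp_eq : ift3 g ∘ euclideanEquiv = (fourierScale : ℂ) • 𝓕⁻ (g ∘ euclideanEquiv) :=
    funext (ift3_euclideanEquiv g)
  have enorm_scale : ‖(fourierScale : ℂ)‖ₑ = fourierScale := by simp [enorm_eq_nnnorm]
  rw [eLpNorm_two_eq_fourierScale_rpow_mul, comp_eq, eLpNorm_const_smul, enorm_scale,
    eLpNorm_two_fourierInv (memLp_one_iff_integrable.1
      (memLp_comp_euclideanEquiv (memLp_one_iff_integrable.2 hg1))) (memLp_comp_euclideanEquiv hg2),
    mul_left_comm, ← eLpNorm_two_eq_fourierScale_rpow_mul]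

lemma exists_schwartz_eq_ft3 (φ : 𝓢(R3, ℂ)) : ∃ Φ : 𝓢(R3, ℂ), ⇑Φ = ft3 φ := by
  refine ⟨(fourierScale : ℂ) • SchwartzMap.compCLMOfContinuousLinearEquiv ℂ euclideanEquiv.symm
    (𝓕 (SchwartzMap.compCLMOfContinuousLinearEquiv ℂ euclideanEquiv φ)), funext fun ζ => ?_⟩
  obtain ⟨w, rfl⟩ := euclideanEquiv.surjective ζ
  simp [ft3_euclideanEquiv, SchwartzMap.fourier_coe]

lemma exists_ft3_eq_schwartz (ψ : 𝓢(R3, ℂ)) : ∃ h : 𝓢(R3, ℂ), ft3 h = ψ := by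
  let h₀ : 𝓢(EuclideanSpace ℝ (Fin 3), ℂ) :=
    (fourierScale : ℂ)⁻¹ • 𝓕⁻ (SchwartzMap.compCLMOfContinuousLinearEquiv ℂ euclideanEquiv ψ)
  refine ⟨SchwartzMap.compCLMOfContinuousLinearEquiv ℂ euclideanEquiv.symm h₀, funext fun ζ => ?_⟩
  obtain ⟨w, rfl⟩ := euclideanEquiv.surjective ζ
  have comp_eq : SchwartzMap.compCLMOfContinuousLinearEquiv ℂ euclideanEquiv.symm h₀ ∘
      euclideanEquiv = h₀ := by
    ext v
    simp
  rw [ft3_euclideanEquiv, comp_eq, ← SchwartzMap.fourier_coe]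
  simp [h₀, FourierTransform.fourier_smul, fourierScale_ne_zero]

lemma integral_ft3_mul_eq (φ h : 𝓢(R3, ℂ)) : ∫ ζ, ft3 φ ζ * h ζ = ∫ z, φ z * ft3 h z := by
  have key := SchwartzMap.integral_fourier_mul_eq
    (SchwartzMap.compCLMOfContinuousLinearEquiv ℂ euclideanEquiv φ)
    (SchwartzMap.compCLMOfContinuousLinearEquiv ℂ euclideanEquiv h)
  simp only [SchwartzMap.fourier_coe] at key
  rw [integral_eq_fourierScale_mul, integral_eq_fourierScale_mul]
  simp only [ft3_euclideanEquiv, mul_assoc, mul_left_comm _ (fourierScale : ℂ),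
    integral_const_mul]
  congr 2

end FourierTransformR3

section Tiles

/-- The dyadic shell `l ≤ |ξ| < 2l` of frequencies in the first variable. -/
def annulus (l : ℝ) : Set ℝ := {x | l ≤ |x| ∧ |x| < 2 * l}

/-- A half-open version of `Gam l (l • m)`: rounding `η / (l ξ)` to the nearest lattice point makes
the tiles of a given `l` disjoint, while the sets `Gam` overlap in their boundaries. -/
def tile (l : ℝ) (m : ℤ × ℤ) : Set R3 :=
  {ζ | ζ.1 ∈ annulus l ∧ round (ζ.2.1 / ζ.1 / l) = m.1 ∧ round (ζ.2.2 / ζ.1 / l) = m.2}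

/-- The local `L²` norms of `g` on the tiles of scale `l`. -/
def tileNorm (l : ℝ) (g : R3 → ℂ) (m : ℤ × ℤ) : ℝ≥0∞ :=
  eLpNorm g 2 (volume.restrict (tile l m))

lemma measurableSet_annulus (l : ℝ) : MeasurableSet (annulus l) := by
  unfold annulus
  measurability

lemma measurableSet_Gam (l : ℝ) (k : ℝ × ℝ) : MeasurableSet (Gam l k) := by
  unfold Gam
  measurability

lemma measurableSet_tile (l : ℝ) (m : ℤ × ℤ) : MeasurableSet (tile l m) := by
  have measurable_round : Measurable (round : ℝ → ℤ) := by
    simp only [funext round_eq]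
    fun_prop
  refine .inter (measurable_fst (measurableSet_annulus l)) (.inter ?_ ?_)
  · exact (measurable_round.comp (by fun_prop)) (measurableSet_singleton m.1)
  · exact (measurable_round.comp (by fun_prop)) (measurableSet_singleton m.2)

lemma abs_sub_mul_le_of_round_div_eq {l x : ℝ} (hl : 0 < l) {m : ℤ} (h : round (x / l) = m) :
    |x - l * m| ≤ l / 2 := by
  calc |x - l * m| = l * |x / l - round (x / l)| := by
        rw [h, ← abs_of_pos hl, ← abs_mul, abs_of_pos hl, mul_sub, mul_div_cancel₀ _ hl.ne']
    _ ≤ l * (1 / 2) := by gcongr; exact abs_sub_round _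
    _ = l / 2 := mul_one_div l 2

lemma tile_subset_Gam {l : ℝ} (hl : 0 < l) (m : ℤ × ℤ) : tile l m ⊆ Gam l (l * m.1, l * m.2) :=
  fun _ ⟨hξ, h1, h2⟩ => ⟨hξ.1, hξ.2, max_le (abs_sub_mul_le_of_round_div_eq hl h1)
    (abs_sub_mul_le_of_round_div_eq hl h2)⟩

lemma pairwise_disjoint_tile (l : ℝ) : Pairwise (Function.onFun Disjoint (tile l)) :=
  fun _ _ hne => Set.disjoint_left.2 fun _ h h' =>
    hne (Prod.ext (h.2.1.symm.trans h'.2.1) (h.2.2.symm.trans h'.2.2))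

lemma iUnion_tile (l : ℝ) : ⋃ m, tile l m = annulus l ×ˢ Set.univ := by
  ext ζ
  simp [tile]

lemma exists_mem_annulus {x : ℝ} (hx : x ≠ 0) : ∃ n : ℤ, x ∈ annulus (2 ^ n) := by
  obtain ⟨n, h_le, h_lt⟩ := exists_mem_Ico_zpow (abs_pos.2 hx) one_lt_two
  exact ⟨n, h_le, h_lt.trans_eq (by rw [zpow_add_one₀ two_ne_zero, mul_comm])⟩

lemma ae_mem_iUnion_tile : ∀ᵐ ζ : R3, ζ ∈ ⋃ n : ℤ, ⋃ m, tile (2 ^ n) m := by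
  have fst_ne_zero : ∀ᵐ ζ : R3, ζ.1 ≠ 0 :=
    Measure.quasiMeasurePreserving_fst.ae (Measure.ae_ne volume 0)
  filter_upwards [fst_ne_zero] with ζ hζ
  simpa only [iUnion_tile, Set.mem_iUnion, Set.mem_prod, Set.mem_univ, and_true] using
    exists_mem_annulus hζ

lemma lintegral_le_tsum_tile (f : R3 → ℝ≥0∞) :
    ∫⁻ ζ, f ζ ≤ ∑' n : ℤ, ∑' m, ∫⁻ ζ in tile (2 ^ n) m, f ζ := by
  rw [← setLIntegral_univ, setLIntegral_congr (Filter.eventuallyEq_univ.2 ae_mem_iUnion_tile).symm]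
  exact (lintegral_iUnion_le _ _).trans
    (ENNReal.tsum_le_tsum fun n => lintegral_iUnion_le _ _)

lemma volume_annulus_le (l : ℝ) : volume (annulus l) ≤ 4 * ENNReal.ofReal l := by
  calc volume (annulus l) ≤ volume (Metric.ball (0 : ℝ) (2 * l)) :=
        measure_mono fun x hx => by simpa using hx.2
    _ = 4 * ENNReal.ofReal l := by
        rw [Real.volume_ball, ← mul_assoc, ENNReal.ofReal_mul (by norm_num)]
        norm_num

lemma measure_prod_le_mul_of_section_le {α β : Type*} [MeasurableSpace α] [MeasurableSpace β]
    {μ : Measure α} {ν : Measure β} [SFinite ν] {s : Set (α × β)} (hs : MeasurableSet s)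
    {A : Set α} (hsA : s ⊆ A ×ˢ Set.univ) {C : ℝ≥0∞} (hC : ∀ x ∈ A, ν (Prod.mk x ⁻¹' s) ≤ C) :
    μ.prod ν s ≤ C * μ A := by
  rw [Measure.prod_apply hs]
  refine (lintegral_mono fun x => ?_).trans (lintegral_indicator_const_le A C)
  by_cases hx : x ∈ A
  · rw [Set.indicator_of_mem hx]
    exact hC x hx
  · have section_empty : Prod.mk x ⁻¹' s = ∅ :=
      Set.eq_empty_of_forall_notMem fun _ hy => hx (hsA hy).1
    simp [section_empty]

lemma section_Gam_subset_closedBall {l x : ℝ} (hx : x ∈ annulus l) (k : ℝ × ℝ) :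
    Prod.mk x ⁻¹' Gam l k ⊆ Metric.closedBall (x • k) (l ^ 2) := by
  have hl : 0 < l := by linarith [hx.1.trans_lt hx.2]
  have hx0 : x ≠ 0 := abs_pos.1 (hl.trans_le hx.1)
  have abs_sub_le {y a : ℝ} (h : |y / x - a| ≤ l / 2) : |y - x * a| ≤ l ^ 2 := by
    calc |y - x * a| = |x| * |y / x - a| := by
          rw [← abs_mul, mul_sub, mul_div_cancel₀ _ hx0]
      _ ≤ 2 * l * (l / 2) := by gcongr; exact hx.2.le
      _ = l ^ 2 := by ring
  rintro y ⟨-, -, hy⟩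
  exact max_le (abs_sub_le ((le_max_left _ _).trans hy)) (abs_sub_le ((le_max_right _ _).trans hy))

lemma volume_Gam_le {l : ℝ} (hl : 0 ≤ l) (k : ℝ × ℝ) :
    volume (Gam l k) ≤ 16 * ENNReal.ofReal l ^ 5 := by
  have Gam_subset : Gam l k ⊆ annulus l ×ˢ Set.univ := fun ζ hζ => ⟨⟨hζ.1, hζ.2.1⟩, trivial⟩
  have volume_ball (y : ℝ × ℝ) :
      volume (Metric.closedBall y (l ^ 2)) = 4 * ENNReal.ofReal (l ^ 2) ^ 2 := by
    rw [← closedBall_prod_same, Measure.volume_eq_prod, Measure.prod_prod, Real.volume_closedBall,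
      Real.volume_closedBall, ENNReal.ofReal_mul zero_le_two, ENNReal.ofReal_ofNat]
    ring
  rw [Measure.volume_eq_prod]
  calc (volume.prod volume) (Gam l k)
      ≤ 4 * ENNReal.ofReal (l ^ 2) ^ 2 * volume (annulus l) :=
        measure_prod_le_mul_of_section_le (measurableSet_Gam l k) Gam_subset fun x hx =>
          (measure_mono (section_Gam_subset_closedBall hx k)).trans_eq (volume_ball _)
    _ ≤ 4 * ENNReal.ofReal (l ^ 2) ^ 2 * (4 * ENNReal.ofReal l) := by
        gcongr
        exact volume_annulus_le l
    _ = 16 * ENNReal.ofReal l ^ 5 := by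
        rw [ENNReal.ofReal_pow hl]
        ring

end Tiles

section Decay

variable {E F G : Type*} [NormedAddCommGroup E] [NormedSpace ℝ E] [NormedAddCommGroup F]
  [NormedSpace ℝ F] [NormedAddCommGroup G] [NormedSpace ℝ G]

lemma exists_norm_schwartz_le_mul_rpow_norm_snd (h : 𝓢(E × F, G)) (k : ℕ) :
    ∃ B : ℝ, ∀ z, ‖h z‖ ≤ B * (1 + ‖z.2‖) ^ (-k : ℝ) := by
  refine ⟨2 ^ k * (Finset.Iic (k, 0)).sup (fun m => SchwartzMap.seminorm ℝ m.1 m.2) h,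
    fun z => ?_⟩
  have decay := SchwartzMap.one_add_le_sup_seminorm_apply (𝕜 := ℝ) (m := (k, 0)) le_rfl le_rfl h z
  rw [norm_iteratedFDeriv_zero] at decay
  rw [Real.rpow_neg (by positivity), Real.rpow_natCast, ← div_eq_mul_inv,
    le_div_iff₀' (by positivity)]
  refine le_trans ?_ decay
  gcongr
  exact norm_snd_le z

lemma exists_eLpNorm_schwartz_restrict_prod_le [MeasurableSpace E] [MeasurableSpace F]
    [BorelSpace F] (μ : Measure E) (ν : Measure F) [SFinite ν] [hν : ν.HasTemperateGrowth]
    {p : ℝ≥0∞} (hp_top : p ≠ ∞) (h : 𝓢(E × F, G)) :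
    ∃ K ≠ ∞, ∀ A, eLpNorm h p ((μ.restrict A).prod ν) ≤ K * μ A ^ (1 / p).toReal := by
  obtain ⟨k, weight_lt_top⟩ := hν.exists_eLpNorm_lt_top p
  set weight : F → ℝ := fun y => (1 + ‖y‖) ^ (-k : ℝ)
  obtain ⟨B, norm_le⟩ : ∃ B : ℝ, ∀ z, ‖h z‖ ≤ (B • (weight ∘ Prod.snd)) z :=
    exists_norm_schwartz_le_mul_rpow_norm_snd h k
  refine ⟨‖B‖ₑ * eLpNorm weight p ν, ENNReal.mul_ne_top enorm_ne_top weight_lt_top.ne, fun A => ?_⟩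
  calc eLpNorm h p ((μ.restrict A).prod ν)
      ≤ ‖B‖ₑ * eLpNorm (weight ∘ Prod.snd) p ((μ.restrict A).prod ν) :=
        (eLpNorm_mono_real norm_le).trans_eq (eLpNorm_const_smul ..)
    _ = ‖B‖ₑ * eLpNorm weight p (μ A • ν) := by
        rw [← eLpNorm_map_measure (by fun_prop) (by fun_prop), Measure.map_snd_prod,
          Measure.restrict_apply_univ]
    _ = ‖B‖ₑ * eLpNorm weight p ν * μ A ^ (1 / p).toReal := by
        rw [eLpNorm_smul_measure_of_ne_top hp_top, smul_eq_mul]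
        ring

lemma lpS_two_tileNorm (l : ℝ) (g : R3 → ℂ) :
    lpS 2 (tileNorm l g) = eLpNorm g 2 ((volume.restrict (annulus l)).prod volume) := by
  unfold tileNorm
  rw [lpS_eLpNorm_restrict two_ne_zero ENNReal.ofNat_ne_top (measurableSet_tile l)
    (pairwise_disjoint_tile l), iUnion_tile, Measure.volume_eq_prod, ← Measure.prod_restrict,
    Measure.restrict_univ]

lemma lpS_tileNorm_le_eLpNorm {r : ℝ≥0∞} (hr : 2 ≤ r) (l : ℝ) (g : R3 → ℂ) :
    lpS r (tileNorm l g) ≤ eLpNorm g 2 volume :=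
  calc lpS r (tileNorm l g) ≤ lpS 2 (tileNorm l g) := lpS_anti two_ne_zero hr _
    _ = eLpNorm g 2 ((volume.restrict (annulus l)).prod volume) := lpS_two_tileNorm l g
    _ ≤ eLpNorm g 2 volume := by
        rw [Measure.volume_eq_prod]
        exact eLpNorm_mono_measure _ (Measure.prod_mono Measure.restrict_le_self le_rfl)

lemma exists_tileNorm_le (h : 𝓢(R3, ℂ)) :
    ∃ K ≠ ∞, ∀ l, 0 < l → ∀ m, tileNorm l h m ≤ K * ENNReal.ofReal l ^ (5 / 2 : ℝ) := by
  obtain ⟨B, norm_le⟩ : ∃ B : ℝ, ∀ ζ, ‖h ζ‖ ≤ B := ⟨_, SchwartzMap.norm_le_seminorm ℝ h⟩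
  refine ⟨ENNReal.ofReal B * 16 ^ (1 / 2 : ℝ), by finiteness, fun l hl m => ?_⟩
  have volume_tile_le : volume (tile l m) ≤ 16 * ENNReal.ofReal l ^ 5 :=
    (measure_mono (tile_subset_Gam hl m)).trans (volume_Gam_le hl.le _)
  calc tileNorm l h m ≤ volume (tile l m) ^ (1 / 2 : ℝ) * ENNReal.ofReal B := by
        simpa [tileNorm] using eLpNorm_le_of_ae_bound (p := 2) (μ := volume.restrict (tile l m))
          (.of_forall norm_le)
    _ ≤ (16 * ENNReal.ofReal l ^ 5) ^ (1 / 2 : ℝ) * ENNReal.ofReal B := by gcongr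
    _ = ENNReal.ofReal B * 16 ^ (1 / 2 : ℝ) * ENNReal.ofReal l ^ (5 / 2 : ℝ) := by
        rw [ENNReal.mul_rpow_of_nonneg _ _ one_half_pos.le, ← ENNReal.rpow_natCast_mul]
        norm_num
        ring

lemma exists_lpS_two_tileNorm_le (h : 𝓢(R3, ℂ)) :
    ∃ K ≠ ∞, ∀ l, lpS 2 (tileNorm l h) ≤ K * ENNReal.ofReal l ^ (1 / 2 : ℝ) := by
  obtain ⟨K, hK, eLpNorm_le⟩ := exists_eLpNorm_schwartz_restrict_prod_le (p := 2) volume volume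
    ENNReal.ofNat_ne_top h
  refine ⟨K * 4 ^ (1 / 2 : ℝ), by finiteness, fun l => ?_⟩
  calc lpS 2 (tileNorm l h) ≤ K * volume (annulus l) ^ (1 / 2 : ℝ) := by
        simpa [lpS_two_tileNorm] using eLpNorm_le (annulus l)
    _ ≤ K * (4 * ENNReal.ofReal l) ^ (1 / 2 : ℝ) := by
        gcongr
        exact volume_annulus_le l
    _ = K * 4 ^ (1 / 2 : ℝ) * ENNReal.ofReal l ^ (1 / 2 : ℝ) := by
        rw [ENNReal.mul_rpow_of_nonneg _ _ one_half_pos.le, mul_assoc]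

lemma exists_lpS_tileNorm_le (h : 𝓢(R3, ℂ)) {r : ℝ} (hr : 2 ≤ r) :
    ∃ K ≠ ∞, ∀ l, 0 < l →
      lpS (.ofReal r) (tileNorm l h) ≤ K * ENNReal.ofReal l ^ (5 / 2 - 4 / r) := by
  have two_le : 2 ≤ ENNReal.ofReal r := by simpa using ENNReal.ofReal_le_ofReal hr
  have one_sub_ratio_nonneg : 0 ≤ 1 - 2 / r :=
    sub_nonneg.2 (div_le_one_of_le₀ hr (by linarith))
  have ratio_nonneg : 0 ≤ 2 / r := by positivity
  obtain ⟨K₀, hK₀, tile_le⟩ := exists_tileNorm_le h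
  obtain ⟨K₂, hK₂, lpS_two_le⟩ := exists_lpS_two_tileNorm_le h
  refine ⟨K₀ ^ (1 - 2 / r) * K₂ ^ (2 / r), by finiteness, fun l hl => ?_⟩
  set L := ENNReal.ofReal l
  have hL : L ≠ 0 := (ENNReal.ofReal_pos.2 hl).ne'
  calc lpS (.ofReal r) (tileNorm l h)
      ≤ (K₀ * L ^ (5 / 2 : ℝ)) ^ (1 - 2 / r) * lpS 2 (tileNorm l h) ^ (2 / r) := by
        simpa [ENNReal.toReal_ofReal (zero_le_two.trans hr)] using
          lpS_le_rpow_mul_lpS_rpow two_ne_zero two_le ENNReal.ofReal_ne_top (tile_le l hl)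
    _ ≤ (K₀ * L ^ (5 / 2 : ℝ)) ^ (1 - 2 / r) * (K₂ * L ^ (1 / 2 : ℝ)) ^ (2 / r) := by
        gcongr
        exact lpS_two_le l
    _ = K₀ ^ (1 - 2 / r) * K₂ ^ (2 / r) *
          (L ^ (5 / 2 * (1 - 2 / r)) * L ^ (1 / 2 * (2 / r))) := by
        rw [ENNReal.mul_rpow_of_nonneg _ _ one_sub_ratio_nonneg,
          ENNReal.mul_rpow_of_nonneg _ _ ratio_nonneg, ← ENNReal.rpow_mul, ← ENNReal.rpow_mul]
        ring
    _ = K₀ ^ (1 - 2 / r) * K₂ ^ (2 / r) * L ^ (5 / 2 - 4 / r) := by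
        rw [← ENNReal.rpow_add _ _ hL ENNReal.ofReal_ne_top]
        ring_nf

lemma ofReal_two_zpow (n : ℤ) : ENNReal.ofReal (2 ^ n) = 2 ^ n := by
  rw [← Real.rpow_intCast, ← ENNReal.ofReal_rpow_of_pos two_pos, ENNReal.rpow_intCast,
    ENNReal.ofReal_ofNat]

lemma two_zpow_rpow_add (n : ℤ) (a b : ℝ) :
    ((2 : ℝ≥0∞) ^ n) ^ (a + b) = ((2 : ℝ≥0∞) ^ n) ^ a * ((2 : ℝ≥0∞) ^ n) ^ b :=
  ENNReal.rpow_add _ _ (ENNReal.zpow_pos two_ne_zero ENNReal.ofNat_ne_top n).ne'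
    (ENNReal.zpow_lt_top two_ne_zero ENNReal.ofNat_ne_top n).ne

lemma tsum_two_zpow_mul_lpS_tileNorm_ne_top (h : 𝓢(R3, ℂ)) {r : ℝ} (hr : 2 < r) :
    ∑' n : ℤ, ((2 : ℝ≥0∞) ^ n) ^ (-(1 / 2) : ℝ) * lpS (.ofReal r) (tileNorm (2 ^ n) h) ≠ ∞ := by
  have two_le : 2 ≤ ENNReal.ofReal r := by simpa using ENNReal.ofReal_le_ofReal hr.le
  have exponent_pos : 0 < 2 - 4 / r := sub_pos.2 ((div_lt_iff₀ (by linarith)).2 (by linarith))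
  obtain ⟨K, hK, lpS_le⟩ := exists_lpS_tileNorm_le h hr.le
  have zpow_rpow (n : ℤ) (a : ℝ) : ((2 : ℝ≥0∞) ^ n) ^ a = (2 ^ a) ^ n := by
    rw [← ENNReal.rpow_intCast, ← ENNReal.rpow_intCast, ← ENNReal.rpow_mul,
      ← ENNReal.rpow_mul, mul_comm]
  refine tsum_int_ne_top_of_le_geometric (A := eLpNorm h 2 volume) (B := K)
    (x := 2 ^ (-(1 / 2) : ℝ)) (y := 2 ^ (-(2 - 4 / r))) (h.memLp 2 volume).2.ne hK
    (ENNReal.rpow_lt_one_of_one_lt_of_neg (by norm_num) (by norm_num))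
    (ENNReal.rpow_lt_one_of_one_lt_of_neg (by norm_num) (by linarith)) (fun n => ?_) fun n => ?_
  · rw [zpow_rpow, zpow_natCast, mul_comm]
    gcongr
    exact lpS_tileNorm_le_eLpNorm two_le _ h
  · calc _ ≤ ((2 : ℝ≥0∞) ^ (-n : ℤ)) ^ (-(1 / 2) : ℝ) *
          (K * ((2 : ℝ≥0∞) ^ (-n : ℤ)) ^ (5 / 2 - 4 / r)) := by
          gcongr
          exact (lpS_le _ (by positivity)).trans_eq (by rw [ofReal_two_zpow])
      _ = K * (2 ^ (-(2 - 4 / r))) ^ n := by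
          rw [mul_left_comm, ← two_zpow_rpow_add, zpow_rpow, ENNReal.zpow_neg, zpow_natCast,
            ENNReal.inv_pow, ← ENNReal.rpow_neg]
          ring_nf

end Decay

section Duality

lemma projG_eq_ift3 (l : ℝ) (k : ℝ × ℝ) (φ : 𝓢(R3, ℂ)) :
    projG l k φ = ift3 ((Gam l k).indicator (ft3 φ)) := by
  ext z
  rw [projG, ift3, ← integral_indicator (measurableSet_Gam l k)]
  simp only [Set.indicator_mul_right]

lemma eLpNorm_projG (l : ℝ) (k : ℝ × ℝ) (φ : 𝓢(R3, ℂ)) :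
    eLpNorm (projG l k φ) 2 volume =
      fourierScale * eLpNorm (ft3 φ) 2 (volume.restrict (Gam l k)) := by
  obtain ⟨Φ, hΦ⟩ := exists_schwartz_eq_ft3 φ
  rw [projG_eq_ift3, ← hΦ, eLpNorm_two_ift3 (Φ.integrable.indicator (measurableSet_Gam l k))
    ((Φ.memLp 2 volume).indicator (measurableSet_Gam l k)),
    eLpNorm_indicator_eq_eLpNorm_restrict (measurableSet_Gam l k)]

lemma lqlpNorm_anti {q q' p p' : ℝ≥0∞} (hq : q ≠ 0) (hqq' : q ≤ q') (hp : p ≠ 0) (hpp' : p ≤ p')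
    (φ : 𝓢(R3, ℂ)) : lqlpNorm q' p' φ ≤ lqlpNorm q p φ := by
  refine (lpS_anti hq hqq' _).trans (lpS_mono fun n => ?_)
  dsimp only
  gcongr
  exact lpS_anti hp hpp' _

lemma lpS_tileNorm_ft3_le {p : ℝ≥0∞} (hp : p ≠ 0) (φ : 𝓢(R3, ℂ)) (n : ℤ) :
    lpS p (tileNorm (2 ^ n) (ft3 φ)) ≤
      (fourierScale : ℝ≥0∞)⁻¹ * ((2 : ℝ≥0∞) ^ n) ^ (-(1 / 2) : ℝ) * lqlpNorm ∞ p φ := by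
  have scale_mul_le : fourierScale * lpS p (tileNorm (2 ^ n) (ft3 φ)) ≤ lpS p fun m : ℤ × ℤ =>
      eLpNorm (projG (2 ^ n) (2 ^ n * m.1, 2 ^ n * m.2) φ) 2 volume := by
    rw [← lpS_const_mul hp]
    refine lpS_mono fun m => ?_
    rw [eLpNorm_projG]
    gcongr
    exact eLpNorm_mono_measure _
      (Measure.restrict_mono_set _ (tile_subset_Gam (by positivity) m))
  have norm_ge : ((2 : ℝ≥0∞) ^ n) ^ (1 / 2 : ℝ) *
      (fourierScale * lpS p (tileNorm (2 ^ n) (ft3 φ))) ≤ lqlpNorm ∞ p φ := by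
    refine le_trans ?_ (le_lpS ENNReal.top_ne_zero _ n)
    gcongr
  have weight_cancel : ((2 : ℝ≥0∞) ^ n) ^ (-(1 / 2) : ℝ) * ((2 : ℝ≥0∞) ^ n) ^ (1 / 2 : ℝ) = 1 := by
    rw [← two_zpow_rpow_add, neg_add_cancel, ENNReal.rpow_zero]
  have scale_cancel : (fourierScale : ℝ≥0∞)⁻¹ * fourierScale = 1 :=
    ENNReal.inv_mul_cancel (by exact_mod_cast fourierScale_ne_zero) ENNReal.coe_ne_top
  calc lpS p (tileNorm (2 ^ n) (ft3 φ))
      = (fourierScale : ℝ≥0∞)⁻¹ * ((2 : ℝ≥0∞) ^ n) ^ (-(1 / 2) : ℝ) *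
          (((2 : ℝ≥0∞) ^ n) ^ (1 / 2 : ℝ) *
            (fourierScale * lpS p (tileNorm (2 ^ n) (ft3 φ)))) := by
        rw [mul_assoc, ← mul_assoc (_ ^ (-(1 / 2) : ℝ)), weight_cancel, one_mul, ← mul_assoc,
          scale_cancel, one_mul]
    _ ≤ _ := by gcongr

lemma lintegral_enorm_mul_le_tsum_lpS_tileNorm {p r : ℝ} (hpr : p.HolderConjugate r)
    {f g : R3 → ℂ} (hf : AEStronglyMeasurable f) (hg : AEStronglyMeasurable g) :
    ∫⁻ ζ, ‖f ζ‖ₑ * ‖g ζ‖ₑ ≤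
      ∑' n : ℤ, lpS (.ofReal p) (tileNorm (2 ^ n) f) * lpS (.ofReal r) (tileNorm (2 ^ n) g) := by
  have cauchy_schwarz (n : ℤ) (m : ℤ × ℤ) :
      ∫⁻ ζ in tile (2 ^ n) m, ‖f ζ‖ₑ * ‖g ζ‖ₑ ≤ tileNorm (2 ^ n) f m * tileNorm (2 ^ n) g m := by
    simpa [tileNorm, eLpNorm_eq_lintegral_rpow_enorm_toReal] using
      ENNReal.lintegral_mul_le_Lp_mul_Lq _ Real.HolderConjugate.two_two hf.restrict.enorm
        hg.restrict.enorm
  calc ∫⁻ ζ, ‖f ζ‖ₑ * ‖g ζ‖ₑ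
      ≤ ∑' n : ℤ, ∑' m, ∫⁻ ζ in tile (2 ^ n) m, ‖f ζ‖ₑ * ‖g ζ‖ₑ := lintegral_le_tsum_tile _
    _ ≤ ∑' n : ℤ, ∑' m, tileNorm (2 ^ n) f m * tileNorm (2 ^ n) g m := by
        gcongr
        exact cauchy_schwarz _ _
    _ ≤ _ := by
        gcongr
        exact tsum_mul_le_lpS_mul_lpS hpr _ _

lemma exists_enorm_integral_mul_le {p : ℝ} (hp1 : 1 < p) (hp2 : p < 2) (ψ : 𝓢(R3, ℂ)) :
    ∃ K ≠ ∞, ∀ φ : 𝓢(R3, ℂ), ‖∫ z, φ z * ψ z‖ₑ ≤ K * lqlpNorm ∞ (.ofReal p) φ := by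
  obtain ⟨h, hψ⟩ := exists_ft3_eq_schwartz ψ
  have hpr := Real.HolderConjugate.conjExponent hp1
  set r := p.conjExponent
  have hr : 2 < r := (lt_div_iff₀ (by linarith)).2 (by linarith)
  set W : ℝ≥0∞ :=
    ∑' n : ℤ, ((2 : ℝ≥0∞) ^ n) ^ (-(1 / 2) : ℝ) * lpS (.ofReal r) (tileNorm (2 ^ n) h)
  have hW : W ≠ ∞ := tsum_two_zpow_mul_lpS_tileNorm_ne_top h hr
  have hp0 : ENNReal.ofReal p ≠ 0 := (ENNReal.ofReal_pos.2 (by linarith)).ne'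
  refine ⟨(fourierScale : ℝ≥0∞)⁻¹ * W, ENNReal.mul_ne_top
    (ENNReal.inv_ne_top.2 (by exact_mod_cast fourierScale_ne_zero)) hW, fun φ => ?_⟩
  obtain ⟨Φ, hΦ⟩ := exists_schwartz_eq_ft3 φ
  calc ‖∫ z, φ z * ψ z‖ₑ = ‖∫ ζ, ft3 φ ζ * h ζ‖ₑ := by rw [integral_ft3_mul_eq, hψ]
    _ ≤ ∫⁻ ζ, ‖ft3 φ ζ‖ₑ * ‖h ζ‖ₑ :=
        (enorm_integral_le_lintegral_enorm _).trans_eq (by simp_rw [enorm_mul])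
    _ ≤ ∑' n : ℤ, lpS (.ofReal p) (tileNorm (2 ^ n) (ft3 φ)) *
          lpS (.ofReal r) (tileNorm (2 ^ n) h) :=
        lintegral_enorm_mul_le_tsum_lpS_tileNorm hpr
          (hΦ ▸ Φ.continuous.aestronglyMeasurable) h.continuous.aestronglyMeasurable
    _ ≤ ∑' n : ℤ, (fourierScale : ℝ≥0∞)⁻¹ * ((2 : ℝ≥0∞) ^ n) ^ (-(1 / 2) : ℝ) *
          lqlpNorm ∞ (.ofReal p) φ * lpS (.ofReal r) (tileNorm (2 ^ n) h) := by
        gcongr with n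
        exact lpS_tileNorm_ft3_le hp0 φ n
    _ = (fourierScale : ℝ≥0∞)⁻¹ * W * lqlpNorm ∞ (.ofReal p) φ := by
        simp_rw [W, ← ENNReal.tsum_mul_left, ← ENNReal.tsum_mul_right]
        exact tsum_congr fun n => by ring

end Duality

theorem lqlp_embeds_distributions_general {q p : ℝ≥0∞} (hq : q ≠ 0) (hp0 : p ≠ 0) (hp2 : p < 2)
    (ψ : 𝓢(R3, ℂ)) :
    ∃ C : ℝ, 0 < C ∧ ∀ φ : 𝓢(R3, ℂ),
      ENNReal.ofReal ‖∫ z, φ z * ψ z‖ ≤ ENNReal.ofReal C * lqlpNorm q p φ := by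
  obtain ⟨p', hp', hp'2⟩ : ∃ p' : ℝ, max p.toReal 1 < p' ∧ p' < 2 :=
    exists_between (max_lt (ENNReal.toReal_lt_of_lt_ofReal (by simpa using hp2)) one_lt_two)
  have one_lt_p' : 1 < p' := (le_max_right _ _).trans_lt hp'
  have hpp' : p ≤ ENNReal.ofReal p' :=
    (ENNReal.le_ofReal_iff_toReal_le hp2.ne_top (by linarith)).2 ((le_max_left _ _).trans hp'.le)
  obtain ⟨K, hK, integral_le⟩ := exists_enorm_integral_mul_le one_lt_p' hp'2 ψ
  refine ⟨K.toReal + 1, by positivity, fun φ => ?_⟩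
  calc ENNReal.ofReal ‖∫ z, φ z * ψ z‖ ≤ K * lqlpNorm ∞ (.ofReal p') φ :=
        (ofReal_norm _).trans_le (integral_le φ)
    _ ≤ ENNReal.ofReal (K.toReal + 1) * lqlpNorm q p φ := by
        gcongr
        · exact (ENNReal.le_ofReal_iff_toReal_le hK (by positivity)).2 (by linarith)
        · exact lqlpNorm_anti hq le_top hp0 hpp' φ

/-!
STATEMENT 12: for 1 ≤ q ≤ ∞ and 1 ≤ p < 2, the space l^q l^p L² embeds
continuously into the tempered distributions: for every Schwartz ψ there is
C = C(ψ,p,q) with |∫ φψ| ≤ C ‖φ‖_{l^q l^p L²} for all Schwartz φ.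
-/
theorem lqlp_embeds_distributions (q p : ℝ≥0∞) (hq : 1 ≤ q) (hp1 : 1 ≤ p) (hp2 : p < 2)
    (ψ : SchwartzMap R3 ℂ) :
    ∃ C : ℝ, 0 < C ∧ ∀ φ : SchwartzMap R3 ℂ,
      ENNReal.ofReal ‖∫ z : R3, φ z * ψ z‖ ≤ ENNReal.ofReal C * lqlpNorm q p φ :=
  lqlp_embeds_distributions_general (one_pos.trans_le hq).ne' (one_pos.trans_le hp1).ne' hp2 ψ
end
end
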